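/- arXiv:2311.10103 — 3 statements merged into one kernel-verified Lean document; each statement's English description precedes it below -/
import Mathlib

section
/- Let Φ be a Young function such that Φ and its conjugate Φ̃ are of class Δ₂, assume ℳ is countably generated modulo μ-null sets, let {T(x)}_{x∈ℝ^N} be an N-dimensional dynamical system on Ω, let (ε_k) ⊆ (0,1] with ε_k → 0, and let (u_k) be a sequence of measurable functions on Q×Ω, extended by 0 to ℝ^N×Ω, with sup_k ‖u_k‖_{Φ,Q×Ω} < ∞, which weakly stochastically 2-scale converges to u₀. Fix r > 0 and let B_s denote the open Euclidean ball of ℝ^N of radius s centered at the origin, |B_s| its Lebesgue measure. Then the sequence w_k(x,ω) = (1/|B_{ε_k²r}|) ∫_{B_{ε_k²r}} u_k(x+ρ, ω) dρ weakly stochastically 2-scale converges to (1/|B_r|) v₀, where v₀(x,ω,y) = ∫_{B_r} u₀(x, ω, y+ρ) dρ. -/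
open MeasureTheory Filter Topology ENNReal

noncomputable section

/-- Euclidean norm on `Fin N → ℝ`. -/
def enorm2 {N : ℕ} (v : Fin N → ℝ) : ℝ := Real.sqrt (∑ i, v i ^ 2)

/-- `Φ : [0,∞) → [0,∞)` is a Young function: continuous, convex, positive on `(0,∞)`,
with `Φ(t)/t → 0` as `t → 0⁺` and `Φ(t)/t → ∞` as `t → ∞` (so `Φ(0) = 0`). -/
def IsYoung (Φ : ℝ → ℝ) : Prop :=
  ContinuousOn Φ (Set.Ici 0) ∧ ConvexOn ℝ (Set.Ici 0) Φ ∧ Φ 0 = 0 ∧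
    (∀ t : ℝ, 0 < t → 0 < Φ t) ∧ (∀ t : ℝ, 0 ≤ t → 0 ≤ Φ t) ∧
    Tendsto (fun t => Φ t / t) (nhdsWithin 0 (Set.Ioi 0)) (nhds 0) ∧
    Tendsto (fun t => Φ t / t) atTop atTop

/-- The `Δ₂`-condition (at infinity). -/
def Delta2 (Φ : ℝ → ℝ) : Prop :=
  ∃ α : ℝ, 0 < α ∧ ∃ t₀ : ℝ, 0 ≤ t₀ ∧ ∀ t : ℝ, t₀ ≤ t → Φ (2 * t) ≤ α * Φ t

/-- The `Δ'`-condition (at infinity). -/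
def DeltaPrime (Φ : ℝ → ℝ) : Prop :=
  ∃ k : ℝ, 0 < k ∧ ∃ t₀ s₀ : ℝ, 0 ≤ t₀ ∧ 0 ≤ s₀ ∧
    ∀ t s : ℝ, t₀ ≤ t → s₀ ≤ s → Φ (t * s) ≤ k * Φ t * Φ s

/-- The conjugate Young function `Φ̃(t) = sup_{s ≥ 0} (st − Φ(s))`. -/
def conjY (Φ : ℝ → ℝ) (t : ℝ) : ℝ := sSup ((fun s => s * t - Φ s) '' Set.Ici 0)

/-- The Luxemburg norm `‖u‖_{Φ,X} = inf {δ > 0 : ∫_X Φ(|u|/δ) dν ≤ 1}` (`+∞` if no such `δ`). -/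
def luxNorm {X : Type*} [MeasurableSpace X] (Φ : ℝ → ℝ) (ν : Measure X) (u : X → ℝ) : ℝ≥0∞ :=
  sInf {d : ℝ≥0∞ | ∃ δ : ℝ, 0 < δ ∧ d = ENNReal.ofReal δ ∧
    (∫⁻ x, ENNReal.ofReal (Φ (|u x| / δ)) ∂ν) ≤ 1}

/-- An `N`-dimensional dynamical system on `Ω` preserving `μ`. -/
def IsDynSys {N : ℕ} {Ω : Type*} [MeasurableSpace Ω] (μ : Measure Ω)
    (T : (Fin N → ℝ) → Ω → Ω) : Prop :=
  T 0 = id ∧ (∀ x y : Fin N → ℝ, T (x + y) = T x ∘ T y) ∧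
    (∀ x : Fin N → ℝ, MeasurePreserving (T x) μ μ) ∧
    Measurable fun p : (Fin N → ℝ) × Ω => T p.1 p.2

/-- `ℤ^N`-periodicity. -/
def ZPeriodic {N : ℕ} (g : (Fin N → ℝ) → ℝ) : Prop :=
  ∀ (y : Fin N → ℝ) (k : Fin N → ℤ), g (y + fun i => (k i : ℝ)) = g y

/-- The unit cube `Y = [0,1]^N`. -/
def Ycube (N : ℕ) : Set (Fin N → ℝ) := Set.Icc 0 1

/-- `ℳ` is countably generated modulo `μ`-null sets. -/
def CountGenModNull {Ω : Type*} [MeasurableSpace Ω] (μ : Measure Ω) : Prop :=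
  ∃ S : ℕ → Set Ω, (∀ n, MeasurableSet (S n)) ∧
    ∀ A : Set Ω, MeasurableSet A →
      ∃ B : Set Ω, MeasurableSet[MeasurableSpace.generateFrom (Set.range S)] B ∧
        μ (symmDiff A B) = 0

/-- Weak stochastic two-scale convergence of `(u k)` to `u₀` along the sequence `(ε k)`. -/
def WeakStoch2Scale {N : ℕ} {Ω : Type*} [MeasurableSpace Ω] (μ : Measure Ω)
    (T : (Fin N → ℝ) → Ω → Ω) (Q : Set (Fin N → ℝ)) (ε : ℕ → ℝ)
    (u : ℕ → (Fin N → ℝ) → Ω → ℝ) (u₀ : (Fin N → ℝ) → Ω → (Fin N → ℝ) → ℝ) : Prop :=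
  ∀ φ : (Fin N → ℝ) → ℝ, ContDiff ℝ (⊤ : ℕ∞) φ → HasCompactSupport φ → tsupport φ ⊆ Q →
    ∀ ψ : Ω → ℝ, Measurable ψ → (∃ C : ℝ, ∀ ω, |ψ ω| ≤ C) →
      ∀ g : (Fin N → ℝ) → ℝ, Continuous g → ZPeriodic g →
        Tendsto
          (fun k => ∫ x in Q, (∫ ω, u k x ω * φ x * ψ (T ((ε k)⁻¹ • x) ω) *
              g (((ε k) ^ 2)⁻¹ • x) ∂μ))
          atTop
          (nhds (∫ x in Q, (∫ ω, (∫ y in Ycube N, u₀ x ω y * φ x * ψ ω * g y) ∂μ)))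


lemma aux_lux {X : Type*} [MeasurableSpace X] {Φ : ℝ → ℝ} (hΦ : IsYoung Φ) {ν : Measure X}
    {u : X → ℝ} {δ : ℝ} (h : luxNorm Φ ν u < ENNReal.ofReal δ) :
    (∫⁻ x, ENNReal.ofReal (Φ (|u x| / δ)) ∂ν) ≤ 1 := by
  obtain ⟨d, ⟨δ', hδ', rfl, hint⟩, hlt⟩ := sInf_lt_iff.1 h
  have hδ : 0 < δ := by
    by_contra hh
    rw [ENNReal.ofReal_of_nonpos (not_lt.1 hh)] at hlt
    exact _root_.not_lt_zero hlt
  have hlt' : δ' < δ := (ENNReal.ofReal_lt_ofReal_iff hδ).1 hlt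
  refine le_trans (lintegral_mono fun x => ENNReal.ofReal_le_ofReal ?_) hint
  obtain ⟨-, hc, h0, -, hnn, -, -⟩ := hΦ
  have ha : 0 ≤ |u x| := abs_nonneg _
  have q1 : (0 : ℝ) ∈ Set.Ici (0 : ℝ) := Set.mem_Ici.2 le_rfl
  have q2 : |u x| / δ' ∈ Set.Ici (0 : ℝ) := Set.mem_Ici.2 (by positivity)
  have q3 : 0 ≤ 1 - δ' / δ := by rw [sub_nonneg, div_le_one hδ]; exact hlt'.le
  have q4 : 0 ≤ δ' / δ := by positivity
  have hc' := hc.2 q1 q2 q3 q4 (by ring)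
  simp only [smul_eq_mul, mul_zero, zero_add, h0] at hc'
  have e1 : δ' / δ * (|u x| / δ') = |u x| / δ := by field_simp
  rw [e1] at hc'
  refine hc'.trans ?_
  have := hnn (|u x| / δ') (by positivity)
  calc δ' / δ * Φ (|u x| / δ') ≤ 1 * Φ (|u x| / δ') := by
        gcongr
        rw [div_le_one hδ]; exact hlt'.le
    _ = _ := one_mul _

lemma aux_young {Φ : ℝ → ℝ} (hΦ : IsYoung Φ) {δ η : ℝ} (hδ : 0 < δ) (hη : 0 < η) :
    ∃ M : ℝ, 0 ≤ M ∧ ∀ t : ℝ, 0 ≤ t → t ≤ M + η * Φ (t / δ) := by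
  obtain ⟨-, -, -, -, hnn, -, hlim⟩ := hΦ
  obtain ⟨A, hA⟩ := (hlim.eventually_ge_atTop (δ / η)).exists_forall_of_atTop
  refine ⟨δ * max A 1, by positivity, fun t ht => ?_⟩
  have hΦt := hnn (t / δ) (by positivity)
  by_cases h : t ≤ δ * max A 1
  · nlinarith [mul_nonneg hη.le hΦt]
  · push Not at h
    have h1 : max A 1 < t / δ := by rw [lt_div_iff₀ hδ]; linarith
    have h2 := hA (t / δ) ((le_max_left _ _).trans h1.le)
    have hpos : 0 < t / δ := lt_of_lt_of_le one_pos ((le_max_right _ _).trans h1.le)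
    rw [le_div_iff₀ hpos] at h2
    have : t ≤ η * Φ (t / δ) := by
      calc t = η * (δ / η * (t / δ)) := by field_simp
        _ ≤ _ := by gcongr
    have : 0 ≤ δ * max A 1 := by positivity
    linarith

lemma aux_bound {X : Type*} [MeasurableSpace X] {Φ : ℝ → ℝ} (hΦ : IsYoung Φ) {ν : Measure X}
    {u : X → ℝ} {δ : ℝ} (h : (∫⁻ x, ENNReal.ofReal (Φ (|u x| / δ)) ∂ν) ≤ 1) {M η : ℝ}
    (hη : 0 < η) (hM : 0 ≤ M) (hδ : 0 < δ) (hb : ∀ t : ℝ, 0 ≤ t → t ≤ M + η * Φ (t / δ))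
    (E : X → ℝ≥0∞) (hE : Measurable E) (C : ℝ≥0∞) (hC : C ≠ ⊤) (hEC : ∀ x, E x ≤ C) :
    ∫⁻ x, ‖u x‖ₑ * E x ∂ν ≤ ENNReal.ofReal M * ∫⁻ x, E x ∂ν + ENNReal.ofReal η * C := by
  have hp : ∀ x, ‖u x‖ₑ * E x ≤ ENNReal.ofReal M * E x +
      (ENNReal.ofReal η * C) * ENNReal.ofReal (Φ (|u x| / δ)) := by
    intro x
    have h1 : ‖u x‖ₑ ≤ ENNReal.ofReal M + ENNReal.ofReal η * ENNReal.ofReal (Φ (|u x| / δ)) := by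
      have hnn := hΦ.2.2.2.2.1 (|u x| / δ) (by positivity)
      rw [← ENNReal.ofReal_mul hη.le, ← ENNReal.ofReal_add hM (by positivity),
        Real.enorm_eq_ofReal_abs]
      exact ENNReal.ofReal_le_ofReal (hb _ (abs_nonneg _))
    calc ‖u x‖ₑ * E x ≤ (ENNReal.ofReal M + ENNReal.ofReal η * ENNReal.ofReal (Φ (|u x| / δ))) * E x := by
          gcongr
      _ = ENNReal.ofReal M * E x + (ENNReal.ofReal η * E x) * ENNReal.ofReal (Φ (|u x| / δ)) := by ring
      _ ≤ _ := by gcongr; exact hEC x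
  calc _ ≤ _ := lintegral_mono hp
    _ = ENNReal.ofReal M * ∫⁻ x, E x ∂ν +
        (ENNReal.ofReal η * C) * ∫⁻ x, ENNReal.ofReal (Φ (|u x| / δ)) ∂ν := by
        rw [lintegral_add_left (by fun_prop), lintegral_const_mul' _ _ ENNReal.ofReal_ne_top,
          lintegral_const_mul' _ _ (ENNReal.mul_ne_top ENNReal.ofReal_ne_top hC)]
    _ ≤ _ := by
        refine add_le_add le_rfl ?_
        exact mul_le_of_le_one_right' h

lemma aux_integrable {X : Type*} [MeasurableSpace X] {Φ : ℝ → ℝ} (hΦ : IsYoung Φ) {ν : Measure X}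
    [IsFiniteMeasure ν] {u : X → ℝ} (hu : Measurable u) {δ : ℝ} (hδ : 0 < δ)
    (h : (∫⁻ x, ENNReal.ofReal (Φ (|u x| / δ)) ∂ν) ≤ 1) : Integrable u ν := by
  obtain ⟨M, hM, hb⟩ := aux_young hΦ hδ one_pos
  have := aux_bound hΦ h one_pos hM hδ hb (fun _ => 1) measurable_const 1 (by simp) (by simp)
  refine ⟨hu.aestronglyMeasurable, ?_⟩
  rw [hasFiniteIntegral_iff_enorm]
  simp only [mul_one] at this
  refine lt_of_le_of_lt this ?_
  simp [ENNReal.mul_lt_top, measure_lt_top]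

lemma aux_transl {N : ℕ} {f : (Fin N → ℝ) → ℝ} (hf : Integrable f) :
    Tendsto (fun h : Fin N → ℝ => ∫⁻ x, ‖f (h + x) - f x‖ₑ) (𝓝 0) (𝓝 0) := by
  have hf' : MemLp f 1 volume := memLp_one_iff_integrable.2 hf
  have key : ∀ h : Fin N → ℝ, ∫⁻ x, ‖f (h + x) - f x‖ₑ =
      edist (DomAddAct.mk h +ᵥ hf'.toLp f) (hf'.toLp f) := by
    intro h
    rw [DomAddAct.mk_vadd_toLp, Lp.edist_toLp_toLp, eLpNorm_one_eq_lintegral_enorm]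
    rfl
  simp_rw [key]
  have hc : Continuous fun h : Fin N → ℝ =>
      edist (DomAddAct.mk h +ᵥ hf'.toLp f) (hf'.toLp f) := by
    have : Fact ((1 : ℝ≥0∞) ≠ ⊤) := ⟨by simp⟩
    have h1 : Continuous fun h : Fin N → ℝ => DomAddAct.mk h := DomAddAct.continuous_mk
    fun_prop
  have := hc.tendsto 0
  simpa using this

lemma aux_strong {N : ℕ} {Ω : Type*} [MeasurableSpace Ω] {μ : Measure Ω}
    [IsProbabilityMeasure μ] {T : (Fin N → ℝ) → Ω → Ω} (hT : IsDynSys μ T)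
    {ψ : Ω → ℝ} (hψ : Measurable ψ) {C : ℝ} (hC : ∀ ω, |ψ ω| ≤ C) :
    Tendsto (fun h : Fin N → ℝ => ∫⁻ ω, ‖ψ (T h ω) - ψ ω‖ₑ ∂μ) (𝓝 0) (𝓝 0) := by
  obtain ⟨hT0, hTadd, hTmp, hTm⟩ := hT
  obtain ⟨F, hF⟩ : ∃ F : Ω → (Fin N → ℝ) → ℝ, F = fun ω x =>
    (Metric.ball (0 : Fin N → ℝ) 2).indicator (fun x => ψ (T x ω)) x := ⟨_, rfl⟩
  have hFm : Measurable fun p : Ω × (Fin N → ℝ) => F p.1 p.2 := by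
    have : (fun p : Ω × (Fin N → ℝ) => F p.1 p.2) =
        (Prod.snd ⁻¹' (Metric.ball (0 : Fin N → ℝ) 2)).indicator (fun p => ψ (T p.2 p.1)) := by
      ext p; simp [hF, Set.indicator]
    rw [this]
    refine Measurable.indicator ?_ (measurable_snd Metric.isOpen_ball.measurableSet)
    exact hψ.comp (hTm.comp measurable_swap)
  have hC0 : 0 ≤ C := by
    have : Nonempty Ω := μ.nonempty_of_neZero
    exact (abs_nonneg _).trans (hC (Classical.arbitrary Ω))
  have hFb : ∀ ω x, ‖F ω x‖ₑ ≤ (Metric.ball (0 : Fin N → ℝ) 2).indicator (fun _ => ENNReal.ofReal C) x := by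
    intro ω x
    by_cases hx : x ∈ Metric.ball (0 : Fin N → ℝ) 2
    · simp only [hF, Set.indicator_of_mem hx, Real.enorm_eq_ofReal_abs]
      exact ENNReal.ofReal_le_ofReal (hC _)
    · simp [hF, Set.indicator_of_notMem hx]
  have hvol : volume (Metric.ball (0 : Fin N → ℝ) 2) < ⊤ := measure_ball_lt_top
  set K : ℝ≥0∞ := ENNReal.ofReal C * volume (Metric.ball (0 : Fin N → ℝ) 2) with hK
  have hKt : K < ⊤ := ENNReal.mul_lt_top ENNReal.ofReal_lt_top hvol
  have hFint' : ∀ ω, ∫⁻ x, ‖F ω x‖ₑ ≤ K := by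
    intro ω
    refine (lintegral_mono (hFb ω)).trans ?_
    rw [lintegral_indicator Metric.isOpen_ball.measurableSet]
    simp [hK]
  have hFint : ∀ ω, Integrable (F ω) := by
    intro ω
    refine ⟨(hFm.comp (measurable_const.prodMk measurable_id)).aestronglyMeasurable, ?_⟩
    rw [hasFiniteIntegral_iff_enorm]
    exact (hFint' ω).trans_lt hKt
  have hmeas2 : ∀ h : Fin N → ℝ, Measurable fun p : Ω × (Fin N → ℝ) => ‖F p.1 (h + p.2) - F p.1 p.2‖ₑ := by
    intro h
    have h1 : Measurable fun p : Ω × (Fin N → ℝ) => F p.1 (h + p.2) :=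
      hFm.comp (g := fun p : Ω × (Fin N → ℝ) => F p.1 p.2)
        (f := fun p : Ω × (Fin N → ℝ) => (p.1, h + p.2)) (by fun_prop)
    exact (h1.sub hFm).enorm
  have hlim : Tendsto (fun h : Fin N → ℝ => ∫⁻ ω, ∫⁻ x, ‖F ω (h + x) - F ω x‖ₑ ∂volume ∂μ) (𝓝 0) (𝓝 0) := by
    have m1 : ∀ h : Fin N → ℝ, Measurable fun ω => ∫⁻ x, ‖F ω (h + x) - F ω x‖ₑ := fun h =>
      Measurable.lintegral_prod_right (hmeas2 h)
    have m2 : ∀ (h : Fin N → ℝ) ω, ∫⁻ x, ‖F ω (h + x) - F ω x‖ₑ ≤ K + K := by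
      intro h ω
      calc ∫⁻ x, ‖F ω (h + x) - F ω x‖ₑ ≤ ∫⁻ x, (‖F ω (h + x)‖ₑ + ‖F ω x‖ₑ) :=
            lintegral_mono fun x => enorm_sub_le
        _ = (∫⁻ x, ‖F ω (h + x)‖ₑ) + ∫⁻ x, ‖F ω x‖ₑ := by
            rw [lintegral_add_right]
            exact (hFm.comp (measurable_const.prodMk measurable_id)).enorm
        _ = (∫⁻ x, ‖F ω x‖ₑ) + ∫⁻ x, ‖F ω x‖ₑ := by
            rw [lintegral_add_left_eq_self (fun x => ‖F ω x‖ₑ) h]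
        _ ≤ K + K := add_le_add (hFint' ω) (hFint' ω)
    have m3 : ∫⁻ _ : Ω, (K + K) ∂μ ≠ ⊤ := by
      rw [lintegral_const]
      exact ENNReal.mul_ne_top (ENNReal.add_ne_top.2 ⟨hKt.ne, hKt.ne⟩) (measure_ne_top _ _)
    have m4 := tendsto_lintegral_filter_of_dominated_convergence (μ := μ)
      (l := 𝓝 (0 : Fin N → ℝ))
      (F := fun h ω => ∫⁻ x, ‖F ω (h + x) - F ω x‖ₑ) (f := fun _ => 0) (fun _ => K + K)
      (Eventually.of_forall m1)
      (Eventually.of_forall fun h => Eventually.of_forall fun ω => m2 h ω) m3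
      (Eventually.of_forall fun ω => aux_transl (hFint ω))
    rwa [lintegral_zero] at m4
  set V : ℝ≥0∞ := volume (Metric.ball (0 : Fin N → ℝ) 1) with hV
  have hV0 : V ≠ 0 := (Metric.measure_ball_pos volume _ one_pos).ne'
  have hVt : V ≠ ⊤ := measure_ball_lt_top.ne
  have hle : ∀ᶠ h : Fin N → ℝ in 𝓝 0, ∫⁻ ω, ‖ψ (T h ω) - ψ ω‖ₑ ∂μ ≤
      V⁻¹ * ∫⁻ ω, ∫⁻ x, ‖F ω (h + x) - F ω x‖ₑ ∂volume ∂μ := by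
    filter_upwards [Metric.ball_mem_nhds (0 : Fin N → ℝ) one_pos] with h hh
    rw [← ENNReal.mul_le_iff_le_inv hV0 hVt]
    have hψm : Measurable fun ω => ‖ψ (T h ω) - ψ ω‖ₑ :=
      ((hψ.comp (hTmp h).measurable).sub hψ).enorm
    calc V * ∫⁻ ω, ‖ψ (T h ω) - ψ ω‖ₑ ∂μ
        = ∫⁻ x in Metric.ball (0 : Fin N → ℝ) 1, ∫⁻ ω, ‖ψ (T h ω) - ψ ω‖ₑ ∂μ := by
          rw [setLIntegral_const, mul_comm]
      _ = ∫⁻ x in Metric.ball (0 : Fin N → ℝ) 1, ∫⁻ ω, ‖F ω (h + x) - F ω x‖ₑ ∂μ := by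
          refine setLIntegral_congr_fun Metric.isOpen_ball.measurableSet fun x hx => ?_
          rw [← (hTmp x).lintegral_comp hψm]
          refine lintegral_congr fun ω => ?_
          have hx2 : x ∈ Metric.ball (0 : Fin N → ℝ) 2 :=
            Metric.ball_subset_ball (by norm_num) hx
          have hhx2 : h + x ∈ Metric.ball (0 : Fin N → ℝ) 2 := by
            rw [mem_ball_zero_iff] at hx hh ⊢
            linarith [norm_add_le h x]
          simp only [hF, Set.indicator_of_mem hx2, Set.indicator_of_mem hhx2, hTadd,
            Function.comp_apply]
      _ ≤ ∫⁻ x, ∫⁻ ω, ‖F ω (h + x) - F ω x‖ₑ ∂μ := setLIntegral_le_lintegral _ _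
      _ = _ := by
          rw [lintegral_lintegral_swap]
          exact ((hmeas2 h).comp measurable_swap).aemeasurable
  have hlim2 : Tendsto (fun h : Fin N → ℝ => V⁻¹ * ∫⁻ ω, ∫⁻ x, ‖F ω (h + x) - F ω x‖ₑ ∂volume ∂μ) (𝓝 0) (𝓝 0) := by
    have := ENNReal.Tendsto.const_mul (a := V⁻¹) hlim (Or.inr (ENNReal.inv_ne_top.2 hV0))
    simpa using this
  exact tendsto_of_tendsto_of_tendsto_of_le_of_le' tendsto_const_nhds hlim2
    (Eventually.of_forall fun _ => zero_le) hle

lemma aux_per_bdd {N : ℕ} {g : (Fin N → ℝ) → ℝ} (hg : Continuous g) (hp : ZPeriodic g) :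
    ∃ C : ℝ, 0 ≤ C ∧ ∀ y, |g y| ≤ C := by
  obtain ⟨C, hC⟩ := (isCompact_Icc (a := (0 : Fin N → ℝ)) (b := 1)).exists_bound_of_continuousOn
    hg.continuousOn
  refine ⟨max C 0, le_max_right _ _, fun y => ?_⟩
  have h1 := hp (fun i => Int.fract (y i)) (fun i => ⌊y i⌋)
  have h2 : ((fun i => Int.fract (y i)) + fun i => ((⌊y i⌋ : ℤ) : ℝ)) = y := by
    ext i; simp [Int.fract_add_floor]
  rw [h2] at h1
  rw [h1]
  refine (hC _ ⟨fun i => Int.fract_nonneg _, fun i => (Int.fract_lt_one _).le⟩).trans (le_max_left _ _)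

open Pointwise in
lemma aux_fd {N : ℕ} (s : Fin N → ℝ) :
    IsAddFundamentalDomain (Submodule.span ℤ (Set.range (Pi.basisFun ℝ (Fin N)))).toAddSubgroup
      (s +ᵥ ZSpan.fundamentalDomain (Pi.basisFun ℝ (Fin N))) volume :=
  (ZSpan.isAddFundamentalDomain' (Pi.basisFun ℝ (Fin N)) volume).vadd_of_comm s

lemma aux_inv {N : ℕ} {α : Type*} {f : (Fin N → ℝ) → α}
    (hp : ∀ (y : Fin N → ℝ) (k : Fin N → ℤ), f (y + fun i => (k i : ℝ)) = f y)
    (v : (Submodule.span ℤ (Set.range (Pi.basisFun ℝ (Fin N)))).toAddSubgroup) (x : Fin N → ℝ) :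
    f (v +ᵥ x) = f x := by
  have hv : (v : Fin N → ℝ) ∈ Submodule.span ℤ (Set.range (Pi.basisFun ℝ (Fin N))) := v.2
  rw [(Pi.basisFun ℝ (Fin N)).mem_span_iff_repr_mem ℤ] at hv
  choose k hk using hv
  have : v +ᵥ x = x + fun i => (k i : ℝ) := by
    ext i
    have := hk i
    simp at this
    simp [AddSubgroup.vadd_def, this, add_comm]
  rw [this, hp]

lemma aux_Y {N : ℕ} : (volume : Measure (Fin N → ℝ)).restrict (Ycube N) =
    volume.restrict (ZSpan.fundamentalDomain (Pi.basisFun ℝ (Fin N))) := by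
  rw [ZSpan.fundamentalDomain_pi_basisFun]
  exact (Measure.restrict_congr_set Measure.univ_pi_Ico_ae_eq_Icc).symm

open Pointwise in
lemma aux_preim {N : ℕ} (s : Fin N → ℝ) (A : Set (Fin N → ℝ)) :
    (fun y => y + s) ⁻¹' (s +ᵥ A) = A := by
  ext y
  simp [Set.mem_vadd_set_iff_neg_vadd_mem]

lemma aux_lper {N : ℕ} {f : (Fin N → ℝ) → ℝ≥0∞}
    (hp : ∀ (y : Fin N → ℝ) (k : Fin N → ℤ), f (y + fun i => (k i : ℝ)) = f y) (s : Fin N → ℝ) :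
    ∫⁻ y in Ycube N, f (y + s) = ∫⁻ y in Ycube N, f y := by
  have : Countable (Submodule.span ℤ (Set.range (Pi.basisFun ℝ (Fin N)))).toAddSubgroup :=
    inferInstanceAs (Countable (Submodule.span ℤ (Set.range (Pi.basisFun ℝ (Fin N)))))
  rw [aux_Y]
  rw [(ZSpan.isAddFundamentalDomain' (Pi.basisFun ℝ (Fin N)) volume).setLIntegral_eq (aux_fd s) f
    (aux_inv hp)]
  conv_lhs => rw [← aux_preim s (ZSpan.fundamentalDomain (Pi.basisFun ℝ (Fin N)))]
  exact (measurePreserving_add_right volume s).setLIntegral_comp_preimage_emb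
    (MeasurableEquiv.addRight s).measurableEmbedding f _

lemma aux_iper {N : ℕ} {f : (Fin N → ℝ) → ℝ} (hp : ZPeriodic f) (s : Fin N → ℝ) :
    ∫ y in Ycube N, f (y + s) = ∫ y in Ycube N, f y := by
  have : Countable (Submodule.span ℤ (Set.range (Pi.basisFun ℝ (Fin N)))).toAddSubgroup :=
    inferInstanceAs (Countable (Submodule.span ℤ (Set.range (Pi.basisFun ℝ (Fin N)))))
  rw [aux_Y]
  rw [(ZSpan.isAddFundamentalDomain' (Pi.basisFun ℝ (Fin N)) volume).setIntegral_eq (aux_fd s)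
    (aux_inv hp)]
  conv_lhs => rw [← aux_preim s (ZSpan.fundamentalDomain (Pi.basisFun ℝ (Fin N)))]
  exact (measurePreserving_add_right volume s).setIntegral_preimage_emb
    (MeasurableEquiv.addRight s).measurableEmbedding f _

lemma aux_limit {N : ℕ} {f g : (Fin N → ℝ) → ℝ} (hf : Measurable f) (hfp : ZPeriodic f)
    (hfi : IntegrableOn f (Ycube N)) (hg : Continuous g) (hgp : ZPeriodic g)
    {B : Set (Fin N → ℝ)} (hB : volume B < ⊤) (a b c : ℝ) :
    ∫ y in Ycube N, (c * ∫ ρ in B, f (y + ρ)) * a * b * g y =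
      ∫ y in Ycube N, f y * a * b * (c * ∫ s in B, g (y - s)) := by
  obtain ⟨C, hC0, hC⟩ := aux_per_bdd hg hgp
  have hBf : IsFiniteMeasure (volume.restrict B) := ⟨by simpa using hB⟩
  have i1 : Integrable (fun p : (Fin N → ℝ) × (Fin N → ℝ) => f (p.1 + p.2))
      ((volume.restrict (Ycube N)).prod (volume.restrict B)) := by
    have hm : Measurable fun p : (Fin N → ℝ) × (Fin N → ℝ) => f (p.1 + p.2) :=
      hf.comp (by fun_prop)
    refine ⟨hm.aestronglyMeasurable, ?_⟩
    rw [hasFiniteIntegral_iff_enorm, lintegral_prod_symm _ hm.enorm.aemeasurable]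
    have : ∀ s : Fin N → ℝ, ∫⁻ y in Ycube N, ‖f (y + s)‖ₑ = ∫⁻ y in Ycube N, ‖f y‖ₑ := fun s =>
      aux_lper (f := fun y => ‖f y‖ₑ) (fun y k => by simp only [hfp y k]) s
    simp only [this, lintegral_const, Measure.restrict_apply_univ]
    exact ENNReal.mul_lt_top (hasFiniteIntegral_iff_enorm.1 hfi.2) hB
  have i2 : Integrable (fun p : (Fin N → ℝ) × (Fin N → ℝ) => f (p.1 + p.2) * g p.1)
      ((volume.restrict (Ycube N)).prod (volume.restrict B)) := by
    refine i1.mul_bdd (c := C) ?_ (Eventually.of_forall fun p => hC p.1)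
    exact (hg.comp continuous_fst).aestronglyMeasurable
  have i3 : Integrable (fun p : (Fin N → ℝ) × (Fin N → ℝ) => f p.1 * g (p.1 - p.2))
      ((volume.restrict (Ycube N)).prod (volume.restrict B)) := by
    have : Integrable (fun p : (Fin N → ℝ) × (Fin N → ℝ) => f p.1)
      ((volume.restrict (Ycube N)).prod (volume.restrict B)) := hfi.comp_fst _
    refine this.mul_bdd (c := C) ?_ (Eventually.of_forall fun p => hC _)
    exact (hg.comp (by fun_prop)).aestronglyMeasurable
  have l1 : ∀ y, (c * ∫ ρ in B, f (y + ρ)) * a * b * g y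
      = (c * a * b) * ∫ ρ in B, f (y + ρ) * g y := by
    intro y; rw [integral_mul_const]; ring
  have l2 : ∀ y, f y * a * b * (c * ∫ s in B, g (y - s))
      = (c * a * b) * ∫ s in B, f y * g (y - s) := by
    intro y; rw [integral_const_mul]; ring
  simp_rw [l1, l2]
  rw [integral_const_mul, integral_const_mul]
  congr 1
  rw [integral_integral_swap (f := fun y ρ => f (y + ρ) * g y) i2,
    integral_integral_swap (f := fun y s => f y * g (y - s)) i3]
  refine integral_congr_ae (Eventually.of_forall fun s => ?_)
  have hp : ZPeriodic fun z => f z * g (z - s) := by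
    intro y k
    have : (y + fun i => (k i : ℝ)) - s = (y - s) + fun i => (k i : ℝ) := by abel
    simp only [this, hfp y k, hgp (y - s) k]
  have := aux_iper hp s
  simpa using this

lemma aux_mp {N : ℕ} {Ω : Type*} [MeasurableSpace Ω] (μ : Measure Ω) [IsProbabilityMeasure μ]
    (v : Fin N → ℝ) : MeasurePreserving (fun p : (Fin N → ℝ) × Ω => (p.1 + v, p.2))
      (volume.prod μ) (volume.prod μ) :=
  (measurePreserving_add_right volume v).prod (MeasurePreserving.id μ)

lemma aux_emb {N : ℕ} {Ω : Type*} [MeasurableSpace Ω] (v : Fin N → ℝ) :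
    MeasurableEmbedding (fun p : (Fin N → ℝ) × Ω => (p.1 + v, p.2)) :=
  ((MeasurableEquiv.addRight v).prodCongr (MeasurableEquiv.refl Ω)).measurableEmbedding

lemma aux_fub {N : ℕ} {Ω : Type*} [MeasurableSpace Ω] {μ : Measure Ω} [IsProbabilityMeasure μ]
    {u : (Fin N → ℝ) → Ω → ℝ} (hum : Measurable fun p : (Fin N → ℝ) × Ω => u p.1 p.2)
    (hui : Integrable (fun p : (Fin N → ℝ) × Ω => u p.1 p.2) (volume.prod μ))
    {H : (Fin N → ℝ) → Ω → ℝ} (hHm : Measurable fun p : (Fin N → ℝ) × Ω => H p.1 p.2)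
    {C : ℝ} (hC : ∀ x ω, |H x ω| ≤ C) {B : Set (Fin N → ℝ)} (hB : volume B < ⊤) (e : ℝ) :
    (∫ x, ∫ ω, (∫ s in B, u (x + e • s) ω) * H x ω ∂μ) =
      ∫ s in B, ∫ p, u p.1 p.2 * H (p.1 - e • s) p.2 ∂(volume.prod μ) ∧
    IntegrableOn (fun s => ∫ p, u p.1 p.2 * H (p.1 - e • s) p.2 ∂(volume.prod μ)) B := by
  have hBf : IsFiniteMeasure (volume.restrict B) := ⟨by simpa using hB⟩
  have i1 : Integrable (fun q : ((Fin N → ℝ) × Ω) × (Fin N → ℝ) => u (q.1.1 + e • q.2) q.1.2)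
      ((volume.prod μ).prod (volume.restrict B)) := by
    have hm : Measurable fun q : ((Fin N → ℝ) × Ω) × (Fin N → ℝ) => u (q.1.1 + e • q.2) q.1.2 :=
      hum.comp (g := fun p : (Fin N → ℝ) × Ω => u p.1 p.2)
        (f := fun q : ((Fin N → ℝ) × Ω) × (Fin N → ℝ) => (q.1.1 + e • q.2, q.1.2)) (by fun_prop)
    rw [integrable_prod_iff' hm.aestronglyMeasurable]
    constructor
    · exact Eventually.of_forall fun s =>
        ((aux_mp μ (e • s)).integrable_comp_emb (aux_emb _)).2 hui
    · have : ∀ s : Fin N → ℝ, ∫ p : (Fin N → ℝ) × Ω, ‖u (p.1 + e • s) p.2‖ ∂(volume.prod μ)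
          = ∫ p : (Fin N → ℝ) × Ω, ‖u p.1 p.2‖ ∂(volume.prod μ) := fun s =>
        (aux_mp μ (e • s)).integral_comp (aux_emb _) (fun p : (Fin N → ℝ) × Ω => ‖u p.1 p.2‖)
      simp only [this]
      exact integrable_const _
  have i2 : Integrable (fun q : ((Fin N → ℝ) × Ω) × (Fin N → ℝ) =>
      u (q.1.1 + e • q.2) q.1.2 * H q.1.1 q.1.2)
      ((volume.prod μ).prod (volume.restrict B)) := by
    refine i1.mul_bdd (c := C) ?_ (Eventually.of_forall fun q => hC _ _)
    exact (hHm.comp measurable_fst).aestronglyMeasurable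
  have tr : ∀ s : Fin N → ℝ, ∫ p : (Fin N → ℝ) × Ω, u (p.1 + e • s) p.2 * H p.1 p.2 ∂(volume.prod μ)
      = ∫ p, u p.1 p.2 * H (p.1 - e • s) p.2 ∂(volume.prod μ) := by
    intro s
    have := (aux_mp μ (e • s)).integral_comp (aux_emb _)
      (fun p : (Fin N → ℝ) × Ω => u p.1 p.2 * H (p.1 - e • s) p.2)
    simpa using this
  have i3 := i2.integral_prod_right
  simp only [tr] at i3
  refine ⟨?_, i3⟩
  have i4 := i2.integral_prod_left
  have := integral_prod _ i4
  simp only [integral_mul_const] at this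
  rw [← this]
  simp only [← integral_mul_const]
  rw [integral_integral_swap (f := fun (p : (Fin N → ℝ) × Ω) (s : Fin N → ℝ) =>
    u (p.1 + e • s) p.2 * H p.1 p.2) i2]
  simp only [tr]

lemma aux_fub2 {N : ℕ} {Ω : Type*} [MeasurableSpace Ω] {μ : Measure Ω} [IsProbabilityMeasure μ]
    {u : (Fin N → ℝ) → Ω → ℝ}
    (hui : Integrable (fun p : (Fin N → ℝ) × Ω => u p.1 p.2) (volume.prod μ))
    {H : (Fin N → ℝ) → Ω → ℝ} (hHm : Measurable fun p : (Fin N → ℝ) × Ω => H p.1 p.2)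
    {C : ℝ} (hC : ∀ x ω, |H x ω| ≤ C) {B : Set (Fin N → ℝ)} (hB : volume B < ⊤) (e : ℝ)
    {g : (Fin N → ℝ) → ℝ} (hg : Continuous g) {C' : ℝ} (hC' : ∀ y, |g y| ≤ C') :
    (∫ x, ∫ ω, u x ω * H x ω * (∫ s in B, g (e • x - s)) ∂μ) =
      ∫ s in B, ∫ p, u p.1 p.2 * H p.1 p.2 * g (e • p.1 - s) ∂(volume.prod μ) ∧
    IntegrableOn (fun s => ∫ p, u p.1 p.2 * H p.1 p.2 * g (e • p.1 - s) ∂(volume.prod μ)) B := by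
  have hBf : IsFiniteMeasure (volume.restrict B) := ⟨by simpa using hB⟩
  have i0 : Integrable (fun p : (Fin N → ℝ) × Ω => u p.1 p.2 * H p.1 p.2) (volume.prod μ) :=
    hui.mul_bdd (c := C) hHm.aestronglyMeasurable (Eventually.of_forall fun q => hC _ _)
  have i2 : Integrable (fun q : ((Fin N → ℝ) × Ω) × (Fin N → ℝ) =>
      u q.1.1 q.1.2 * H q.1.1 q.1.2 * g (e • q.1.1 - q.2))
      ((volume.prod μ).prod (volume.restrict B)) := by
    refine (i0.comp_fst _).mul_bdd (c := C') ?_ (Eventually.of_forall fun q => hC' _)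
    exact (hg.measurable.comp (by fun_prop)).aestronglyMeasurable
  refine ⟨?_, i2.integral_prod_right⟩
  have i4 := i2.integral_prod_left
  have := integral_prod _ i4
  simp only [integral_const_mul] at this
  rw [← this]
  simp only [← integral_const_mul]
  rw [integral_integral_swap (f := fun (p : (Fin N → ℝ) × Ω) (s : Fin N → ℝ) =>
    u p.1 p.2 * H p.1 p.2 * g (e • p.1 - s)) i2]

lemma aux_est {N : ℕ} {Ω : Type*} [MeasurableSpace Ω] {μ : Measure Ω} [IsProbabilityMeasure μ]
    {T : (Fin N → ℝ) → Ω → Ω} (hT : IsDynSys μ T) {Q : Set (Fin N → ℝ)}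
    {φ : (Fin N → ℝ) → ℝ} {ψ : Ω → ℝ} (hψ : Measurable ψ) {g : (Fin N → ℝ) → ℝ}
    (hφ : Continuous φ)
    {Cφ Cψ Cg : ℝ} (hCφ : ∀ x, |φ x| ≤ Cφ) (hCψ : ∀ x, |ψ x| ≤ Cψ) (hCg : ∀ x, |g x| ≤ Cg)
    {e : ℝ} (he : 0 < e) (s : Fin N → ℝ) {a b : ℝ≥0∞}
    (ha : ∀ x, ‖φ (x - e ^ 2 • s) - φ x‖ₑ ≤ a)
    (hb : ∫⁻ ω, ‖ψ (T (-(e • s)) ω) - ψ ω‖ₑ ∂μ ≤ b) :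
    ∫⁻ p : (Fin N → ℝ) × Ω, ‖(φ (p.1 - e ^ 2 • s) * ψ (T (e⁻¹ • (p.1 - e ^ 2 • s)) p.2)
      - φ p.1 * ψ (T (e⁻¹ • p.1) p.2)) * g ((e ^ 2)⁻¹ • p.1 - s)‖ₑ ∂((volume.restrict Q).prod μ)
    ≤ ENNReal.ofReal Cg * ((ENNReal.ofReal Cψ * a + ENNReal.ofReal Cφ * b) * volume Q) := by
  obtain ⟨hT0, hTadd, hTmp, hTm⟩ := hT
  have hh : ∀ x : Fin N → ℝ, T (e⁻¹ • (x - e ^ 2 • s)) = T (-(e • s)) ∘ T (e⁻¹ • x) := by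
    intro x
    rw [← hTadd]
    congr 1
    rw [smul_sub, smul_smul]
    have : e⁻¹ * e ^ 2 = e := by field_simp
    rw [this]; abel
  have hen : ∀ {t C : ℝ}, |t| ≤ C → ‖t‖ₑ ≤ ENNReal.ofReal C := by
    intro t C h
    rw [Real.enorm_eq_ofReal_abs]; exact ENNReal.ofReal_le_ofReal h
  set ζ : Ω → ℝ≥0∞ := fun ω => ‖ψ (T (-(e • s)) ω) - ψ ω‖ₑ with hζ
  have hζm : Measurable ζ := ((hψ.comp (hTmp _).measurable).sub hψ).enorm
  have hpt : ∀ p : (Fin N → ℝ) × Ω, ‖(φ (p.1 - e ^ 2 • s) * ψ (T (e⁻¹ • (p.1 - e ^ 2 • s)) p.2)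
      - φ p.1 * ψ (T (e⁻¹ • p.1) p.2)) * g ((e ^ 2)⁻¹ • p.1 - s)‖ₑ ≤
      ENNReal.ofReal Cg * (ENNReal.ofReal Cψ * a + ENNReal.ofReal Cφ * ζ (T (e⁻¹ • p.1) p.2)) := by
    intro p
    rw [hh]
    have : (φ (p.1 - e ^ 2 • s) * ψ ((T (-(e • s)) ∘ T (e⁻¹ • p.1)) p.2)
      - φ p.1 * ψ (T (e⁻¹ • p.1) p.2)) * g ((e ^ 2)⁻¹ • p.1 - s) =
      g ((e ^ 2)⁻¹ • p.1 - s) * (ψ ((T (-(e • s)) ∘ T (e⁻¹ • p.1)) p.2) * (φ (p.1 - e ^ 2 • s) - φ p.1)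
        + φ p.1 * (ψ (T (-(e • s)) (T (e⁻¹ • p.1) p.2)) - ψ (T (e⁻¹ • p.1) p.2))) := by
      simp only [Function.comp_apply]; ring
    rw [this, enorm_mul]
    refine mul_le_mul' (hen (hCg _)) ((enorm_add_le _ _).trans ?_)
    rw [enorm_mul, enorm_mul]
    exact add_le_add (mul_le_mul' (hen (hCψ _)) (ha _)) (mul_le_mul' (hen (hCφ _)) le_rfl)
  refine (lintegral_mono hpt).trans ?_
  have hm1 : Measurable fun p : (Fin N → ℝ) × Ω => ζ (T (e⁻¹ • p.1) p.2) :=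
    hζm.comp (hTm.comp (g := fun p : (Fin N → ℝ) × Ω => T p.1 p.2)
      (f := fun p : (Fin N → ℝ) × Ω => (e⁻¹ • p.1, p.2)) (by fun_prop))
  rw [lintegral_prod _ (by fun_prop)]
  calc _ ≤ ∫⁻ x in Q, ENNReal.ofReal Cg * (ENNReal.ofReal Cψ * a + ENNReal.ofReal Cφ * b) := by
        refine lintegral_mono fun x => ?_
        have hm2 : Measurable fun ω : Ω => ζ (T (e⁻¹ • x) ω) := hζm.comp (hTmp _).measurable
        simp only
        rw [lintegral_const_mul' _ _ ENNReal.ofReal_ne_top, lintegral_add_left measurable_const,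
          lintegral_const_mul' (ENNReal.ofReal Cφ) _ ENNReal.ofReal_ne_top,
          (hTmp _).lintegral_comp hζm]
        simp only [lintegral_const, measure_univ, mul_one]
        gcongr
    _ = _ := by rw [setLIntegral_const, mul_assoc]

lemma aux_ball {N : ℕ} (r : ℝ) : Bornology.IsBounded {ρ : Fin N → ℝ | enorm2 ρ < r} := by
  refine (Metric.isBounded_closedBall (x := (0 : Fin N → ℝ)) (r := max r 0)).subset fun ρ hρ => ?_
  rw [mem_closedBall_zero_iff]
  refine (pi_norm_le_iff_of_nonneg (le_max_right _ _)).2 fun i => ?_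
  refine le_trans ?_ ((le_of_lt hρ).trans (le_max_left _ _))
  rw [enorm2, Real.norm_eq_abs, ← Real.sqrt_sq_eq_abs]
  refine Real.sqrt_le_sqrt ?_
  exact Finset.single_le_sum (f := fun i => ρ i ^ 2) (fun i _ => sq_nonneg _) (Finset.mem_univ i)

open Pointwise in
lemma aux_scale {N : ℕ} (r : ℝ) {E : ℝ} (hE : 0 < E) :
    {ρ : Fin N → ℝ | enorm2 ρ < E * r} = E • {ρ : Fin N → ℝ | enorm2 ρ < r} := by
  ext ρ
  rw [Set.mem_smul_set_iff_inv_smul_mem₀ hE.ne']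
  have : enorm2 (E⁻¹ • ρ) = E⁻¹ * enorm2 ρ := by
    simp only [enorm2, Pi.smul_apply, smul_eq_mul, mul_pow, ← Finset.mul_sum]
    rw [Real.sqrt_mul (by positivity), Real.sqrt_sq (by positivity)]
  simp only [Set.mem_ofPred_eq, this]
  rw [inv_mul_lt_iff₀ hE]

lemma aux_avg {N : ℕ} (r : ℝ) {E : ℝ} (hE : 0 < E) (f : (Fin N → ℝ) → ℝ) :
    ((volume {ρ : Fin N → ℝ | enorm2 ρ < E * r}).toReal)⁻¹ *
          ∫ ρ in {ρ : Fin N → ℝ | enorm2 ρ < E * r}, f ρ =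
    ((volume {ρ : Fin N → ℝ | enorm2 ρ < r}).toReal)⁻¹ *
          ∫ ρ in {ρ : Fin N → ℝ | enorm2 ρ < r}, f (E • ρ) := by
  rw [aux_scale r hE, Measure.setIntegral_comp_smul_of_pos _ _ _ hE, Measure.addHaar_smul,
    ENNReal.toReal_mul, ENNReal.toReal_ofReal (abs_nonneg _), abs_of_pos (by positivity),
    mul_inv, smul_eq_mul]
  ring

lemma aux_ext {N : ℕ} {Ω : Type*} [MeasurableSpace Ω] {μ : Measure Ω} [IsProbabilityMeasure μ]
    (Q : Set (Fin N → ℝ)) :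
    (volume.restrict Q).prod μ = (volume.prod μ).restrict (Q ×ˢ (Set.univ : Set Ω)) := by
  rw [← Measure.prod_restrict, Measure.restrict_univ]

lemma aux_arith {x η : ℝ} (hx : 0 ≤ x) (hη : 0 < η) : x * (η / (2 * (x + 1))) ≤ η / 2 := by
  rw [mul_div_assoc', div_le_div_iff₀ (by positivity) (by positivity)]
  nlinarith

lemma aux_arith2 {M Cg Cψ Cφ τ η' CD : ℝ} {V : ℝ≥0∞} (hM : 0 ≤ M) (hCg : 0 ≤ Cg) (hCψ : 0 ≤ Cψ)
    (hCφ : 0 ≤ Cφ) (hτ : 0 ≤ τ) (hη' : 0 ≤ η') (hCD : 0 ≤ CD) (hV : V ≠ ⊤) :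
    ENNReal.ofReal M * (ENNReal.ofReal Cg * ((ENNReal.ofReal Cψ * ENNReal.ofReal τ +
      ENNReal.ofReal Cφ * ENNReal.ofReal τ) * V)) + ENNReal.ofReal η' * ENNReal.ofReal CD =
    ENNReal.ofReal (M * (Cg * ((Cψ + Cφ) * V.toReal)) * τ + CD * η') := by
  have hV' : 0 ≤ V.toReal := ENNReal.toReal_nonneg
  conv_lhs => rw [← ENNReal.ofReal_toReal hV]
  rw [← ENNReal.ofReal_mul hCψ, ← ENNReal.ofReal_mul hCφ,
    ← ENNReal.ofReal_add (by positivity) (by positivity),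
    ← ENNReal.ofReal_mul (by positivity), ← ENNReal.ofReal_mul (by positivity),
    ← ENNReal.ofReal_mul (by positivity), ← ENNReal.ofReal_mul (by positivity),
    ← ENNReal.ofReal_add (by positivity) (by positivity)]
  congr 1
  ring

set_option maxHeartbeats 1000000 in
/-- two-scale convergence of normalized ball averages at scale `ε²`. -/
theorem stmt4 {N : ℕ} (hN : 1 ≤ N) {Ω : Type*} [MeasurableSpace Ω] (μ : Measure Ω)
    [IsProbabilityMeasure μ] (hgen : CountGenModNull μ)
    (Φ : ℝ → ℝ) (hΦ : IsYoung Φ) (hΦ2 : Delta2 Φ) (hΦc2 : Delta2 (conjY Φ))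
    (T : (Fin N → ℝ) → Ω → Ω) (hT : IsDynSys μ T)
    (Q : Set (Fin N → ℝ)) (hQo : IsOpen Q) (hQb : Bornology.IsBounded Q)
    (ε : ℕ → ℝ) (hε : ∀ k, ε k ∈ Set.Ioc (0 : ℝ) 1) (hε0 : Tendsto ε atTop (nhds 0))
    (u : ℕ → (Fin N → ℝ) → Ω → ℝ)
    (humeas : ∀ k, Measurable fun p : (Fin N → ℝ) × Ω => u k p.1 p.2)
    (huzero : ∀ k, ∀ x ∉ Q, ∀ ω, u k x ω = 0)
    (hubd : (⨆ k, luxNorm Φ ((volume.restrict Q).prod μ) fun p => u k p.1 p.2) < ⊤)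
    (u₀ : (Fin N → ℝ) → Ω → (Fin N → ℝ) → ℝ)
    (hu₀meas : Measurable fun p : ((Fin N → ℝ) × Ω) × (Fin N → ℝ) => u₀ p.1.1 p.1.2 p.2)
    (hu₀per : ∀ x ω, ZPeriodic (u₀ x ω))
    (hu₀bd : luxNorm Φ (((volume.restrict Q).prod μ).prod (volume.restrict (Ycube N)))
      (fun p => u₀ p.1.1 p.1.2 p.2) < ⊤)
    (hconv : WeakStoch2Scale μ T Q ε u u₀)
    (r : ℝ) (hr : 0 < r) :
    WeakStoch2Scale μ T Q ε
      (fun k x ω =>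
        ((volume {ρ : Fin N → ℝ | enorm2 ρ < (ε k) ^ 2 * r}).toReal)⁻¹ *
          ∫ ρ in {ρ : Fin N → ℝ | enorm2 ρ < (ε k) ^ 2 * r}, u k (x + ρ) ω)
      (fun x ω y =>
        ((volume {ρ : Fin N → ℝ | enorm2 ρ < r}).toReal)⁻¹ *
          ∫ ρ in {ρ : Fin N → ℝ | enorm2 ρ < r}, u₀ x ω (y + ρ)) := by

  intro φ hφs hφc hφQ ψ hψ hψb g hg hgp
  obtain ⟨Cψ, hCψ⟩ := hψb
  obtain ⟨Cg, hCg0, hCg⟩ := aux_per_bdd hg hgp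
  have hφ : Continuous φ := hφs.continuous
  obtain ⟨Cφ, hCφ'⟩ := hφc.exists_bound_of_continuous hφ
  have hCφ : ∀ x, |φ x| ≤ Cφ := hCφ'
  have hCφ0 : 0 ≤ Cφ := (abs_nonneg _).trans (hCφ 0)
  have hCψ0 : 0 ≤ Cψ := by
    have : Nonempty Ω := μ.nonempty_of_neZero
    exact (abs_nonneg _).trans (hCψ (Classical.arbitrary Ω))
  set B : Set (Fin N → ℝ) := {ρ : Fin N → ℝ | enorm2 ρ < r} with hBdef
  have hBb : Bornology.IsBounded B := aux_ball r
  have hBv : volume B < ⊤ := hBb.measure_lt_top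
  have hBf : IsFiniteMeasure (volume.restrict B) := ⟨by simpa using hBv⟩
  have hQv : volume Q < ⊤ := hQb.measure_lt_top
  have hQf : IsFiniteMeasure (volume.restrict Q) := ⟨by simpa using hQv⟩
  have hQm : MeasurableSet Q := hQo.measurableSet
  set c : ℝ := ((volume B).toReal)⁻¹ with hc
  -- bounds on u
  obtain ⟨δ, hδ0, hδ⟩ : ∃ δ : ℝ, 0 < δ ∧ ∀ k,
      (∫⁻ p, ENNReal.ofReal (Φ (|u k p.1 p.2| / δ)) ∂((volume.restrict Q).prod μ)) ≤ 1 := by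
    set S := ⨆ k, luxNorm Φ ((volume.restrict Q).prod μ) fun p => u k p.1 p.2 with hS
    refine ⟨S.toReal + 1, by positivity, fun k => aux_lux hΦ ?_⟩
    refine lt_of_le_of_lt (le_iSup (fun k => luxNorm Φ ((volume.restrict Q).prod μ)
      fun p => u k p.1 p.2) k) ?_
    rw [← hS, ← ENNReal.ofReal_toReal hubd.ne]
    simp only [ENNReal.toReal_ofReal ENNReal.toReal_nonneg]
    exact (ENNReal.ofReal_lt_ofReal_iff (by positivity)).2 (by linarith)
  have huQ : ∀ k, Integrable (fun p : (Fin N → ℝ) × Ω => u k p.1 p.2)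
      ((volume.restrict Q).prod μ) := fun k => aux_integrable hΦ (humeas k) hδ0 (hδ k)
  have hui : ∀ k, Integrable (fun p : (Fin N → ℝ) × Ω => u k p.1 p.2) (volume.prod μ) := by
    intro k
    have h1 := huQ k
    rw [aux_ext Q] at h1
    refine (integrableOn_iff_integrable_of_support_subset ?_).1 h1
    intro p hp
    refine ⟨?_, trivial⟩
    by_contra hpQ
    exact hp (huzero k _ hpQ _)
  -- integrability of the limit
  have hu₀i : Integrable (fun p : ((Fin N → ℝ) × Ω) × (Fin N → ℝ) => u₀ p.1.1 p.1.2 p.2)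
      (((volume.restrict Q).prod μ).prod (volume.restrict (Ycube N))) := by
    have hYf : IsFiniteMeasure ((volume : Measure (Fin N → ℝ)).restrict (Ycube N)) :=
      ⟨by simpa [Ycube] using (isCompact_Icc (a := (0 : Fin N → ℝ)) (b := 1)).measure_lt_top⟩
    set S := luxNorm Φ (((volume.restrict Q).prod μ).prod (volume.restrict (Ycube N)))
      (fun p => u₀ p.1.1 p.1.2 p.2) with hS
    refine aux_integrable (δ := S.toReal + 1) hΦ hu₀meas (by positivity) (aux_lux hΦ ?_)
    rw [← hS, ← ENNReal.ofReal_toReal hu₀bd.ne]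
    simp only [ENNReal.toReal_ofReal ENNReal.toReal_nonneg]
    exact (ENNReal.ofReal_lt_ofReal_iff (by positivity)).2 (by linarith)
  -- the averaged test function
  set G : (Fin N → ℝ) → ℝ := fun y => c * ∫ s in B, g (y - s) with hG
  have hGc : Continuous G := by
    refine continuous_const.mul ?_
    refine continuous_of_dominated (bound := fun _ => Cg) (fun y => ?_) (fun y => ?_)
      (integrable_const _) (Eventually.of_forall fun s => by fun_prop)
    · exact Continuous.aestronglyMeasurable (by fun_prop)
    · exact Eventually.of_forall fun s => hCg _
  have hGp : ZPeriodic G := by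
    intro y k
    have : ∀ s, (y + fun i => (k i : ℝ)) - s = (y - s) + fun i => (k i : ℝ) := fun s => by abel
    simp only [hG, this, hgp (y - _) k]
  have hmain := hconv φ hφs hφc hφQ ψ hψ ⟨Cψ, hCψ⟩ G hGc hGp
  -- identification of the limit
  have hlimeq : (∫ x in Q, (∫ ω, (∫ y in Ycube N, (c * ∫ ρ in B, u₀ x ω (y + ρ)) * φ x * ψ ω * g y) ∂μ))
      = ∫ x in Q, (∫ ω, (∫ y in Ycube N, u₀ x ω y * φ x * ψ ω * G y) ∂μ) := by
    have h1 := Measure.ae_ae_of_ae_prod hu₀i.prod_right_ae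
    refine integral_congr_ae ?_
    filter_upwards [h1] with x hx
    refine integral_congr_ae ?_
    filter_upwards [hx] with ω hω
    exact aux_limit (f := u₀ x ω)
      (hu₀meas.comp (g := fun p : ((Fin N → ℝ) × Ω) × (Fin N → ℝ) => u₀ p.1.1 p.1.2 p.2)
        (f := fun y => ((x, ω), y)) (by fun_prop)) (hu₀per x ω) hω hg hgp hBv _ _ _
  rw [hlimeq]
  -- key functions
  set h : ℕ → (Fin N → ℝ) → Ω → ℝ := fun k x ω => φ x * ψ (T ((ε k)⁻¹ • x) ω) with hh
  have hhm : ∀ k, Measurable fun p : (Fin N → ℝ) × Ω => h k p.1 p.2 := by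
    intro k
    have h1 : Measurable fun p : (Fin N → ℝ) × Ω => T ((ε k)⁻¹ • p.1) p.2 :=
      hT.2.2.2.comp (g := fun p : (Fin N → ℝ) × Ω => T p.1 p.2)
        (f := fun p : (Fin N → ℝ) × Ω => ((ε k)⁻¹ • p.1, p.2)) (by fun_prop)
    exact (hφ.measurable.comp measurable_fst).mul (hψ.comp h1)
  have hhb : ∀ k x ω, |h k x ω| ≤ Cφ * Cψ := by
    intro k x ω
    rw [hh, abs_mul]
    exact mul_le_mul (hCφ _) (hCψ _) (abs_nonneg _) hCφ0
  set H : ℕ → (Fin N → ℝ) → Ω → ℝ := fun k x ω => h k x ω * g (((ε k) ^ 2)⁻¹ • x) with hH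
  have hHm : ∀ k, Measurable fun p : (Fin N → ℝ) × Ω => H k p.1 p.2 := by
    intro k
    exact (hhm k).mul (hg.measurable.comp (by fun_prop))
  have hHb : ∀ k x ω, |H k x ω| ≤ Cφ * Cψ * Cg := by
    intro k x ω
    rw [hH, abs_mul]
    exact mul_le_mul (hhb _ _ _) (hCg _) (abs_nonneg _) (by positivity)
  set K₁ : ℕ → (Fin N → ℝ) → ℝ := fun k s =>
    ∫ p, u k p.1 p.2 * H k (p.1 - (ε k) ^ 2 • s) p.2 ∂(volume.prod μ) with hK₁
  set K₂ : ℕ → (Fin N → ℝ) → ℝ := fun k s =>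
    ∫ p, u k p.1 p.2 * h k p.1 p.2 * g (((ε k) ^ 2)⁻¹ • p.1 - s) ∂(volume.prod μ) with hK₂
  have F1 := fun k => aux_fub (humeas k) (hui k) (hHm k) (hHb k) hBv ((ε k) ^ 2)
  have F2 := fun k => aux_fub2 (hui k) (hhm k) (hhb k) hBv (((ε k) ^ 2)⁻¹) hg hCg
  have hI : ∀ k, (∫ x in Q, (∫ ω, (((volume {ρ : Fin N → ℝ | enorm2 ρ < (ε k) ^ 2 * r}).toReal)⁻¹ *
          ∫ ρ in {ρ : Fin N → ℝ | enorm2 ρ < (ε k) ^ 2 * r}, u k (x + ρ) ω) * φ x *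
          ψ (T ((ε k)⁻¹ • x) ω) * g (((ε k) ^ 2)⁻¹ • x) ∂μ)) = c * ∫ s in B, K₁ k s := by
    intro k
    have he : 0 < (ε k) ^ 2 := pow_pos (hε k).1 2
    rw [← (F1 k).1, ← integral_const_mul]
    rw [setIntegral_eq_integral_of_forall_compl_eq_zero]
    · refine integral_congr_ae (Eventually.of_forall fun x => ?_)
      simp only
      rw [← integral_const_mul]
      refine integral_congr_ae (Eventually.of_forall fun ω => ?_)
      simp only
      rw [aux_avg r he (fun ρ => u k (x + ρ) ω)]
      simp only [hH, hh]
      ring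
    · intro x hx
      have : φ x = 0 := image_eq_zero_of_notMem_tsupport fun hx' => hx (hφQ hx')
      simp [this]
  have hII : ∀ k, (∫ x in Q, (∫ ω, u k x ω * φ x * ψ (T ((ε k)⁻¹ • x) ω) *
      G (((ε k) ^ 2)⁻¹ • x) ∂μ)) = c * ∫ s in B, K₂ k s := by
    intro k
    rw [← (F2 k).1, ← integral_const_mul]
    rw [setIntegral_eq_integral_of_forall_compl_eq_zero]
    · refine integral_congr_ae (Eventually.of_forall fun x => ?_)
      simp only
      rw [← integral_const_mul]
      refine integral_congr_ae (Eventually.of_forall fun ω => ?_)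
      simp only [hG, hh]
      ring
    · intro x hx
      have : φ x = 0 := image_eq_zero_of_notMem_tsupport fun hx' => hx (hφQ hx')
      simp [this]
  -- uniform smallness
  have hsmall : ∀ η : ℝ, 0 < η → ∀ᶠ k in atTop, ∀ s ∈ B, ‖K₁ k s - K₂ k s‖ ≤ η := by
    intro η hη
    set CD : ℝ := 2 * (Cφ * Cψ * Cg) with hCD
    have hCD0 : 0 ≤ CD := by positivity
    set η' : ℝ := η / (2 * (CD + 1)) with hη'
    have hη'0 : 0 < η' := by positivity
    obtain ⟨M, hM0, hM⟩ := aux_young hΦ hδ0 hη'0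
    set L : ℝ := M * (Cg * ((Cψ + Cφ) * (volume Q).toReal)) with hL
    have hL0 : 0 ≤ L := by positivity
    set τ : ℝ := η / (2 * (L + 1)) with hτ
    have hτ0 : 0 < τ := by positivity
    obtain ⟨R, hR0, hR⟩ : ∃ R : ℝ, 0 < R ∧ ∀ s ∈ B, ‖s‖ ≤ R := hBb.exists_pos_norm_le
    have huc : UniformContinuous φ := hφc.uniformContinuous_of_continuous hφ
    obtain ⟨d, hd0, hd⟩ := Metric.uniformContinuous_iff.1 huc τ hτ0
    have hst := aux_strong hT hψ hCψ
    have hst2 : ∀ᶠ v : Fin N → ℝ in 𝓝 0, ∫⁻ ω, ‖ψ (T v ω) - ψ ω‖ₑ ∂μ ≤ ENNReal.ofReal τ :=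
      hst.eventually (ge_mem_nhds (ENNReal.ofReal_pos.2 hτ0))
    obtain ⟨d', hd'0, hd'⟩ := Metric.eventually_nhds_iff.1 hst2
    have hev : ∀ᶠ k in atTop, ε k * R < min d d' := by
      have : Tendsto (fun k => ε k * R) atTop (𝓝 0) := by simpa using hε0.mul_const R
      exact this.eventually (gt_mem_nhds (lt_min hd0 hd'0))
    filter_upwards [hev] with k hk s hs
    obtain ⟨he0, he1⟩ := hε k
    have hes : ‖ε k • s‖ < min d d' := by
      rw [norm_smul, Real.norm_of_nonneg he0.le]
      exact lt_of_le_of_lt (mul_le_mul_of_nonneg_left (hR s hs) he0.le) hk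
    have hes2 : ‖(ε k) ^ 2 • s‖ < d := by
      rw [norm_smul, Real.norm_of_nonneg (by positivity)]
      rw [norm_smul, Real.norm_of_nonneg he0.le] at hes
      have : (ε k) ^ 2 ≤ ε k := by nlinarith
      exact lt_of_le_of_lt (mul_le_mul_of_nonneg_right this (norm_nonneg _))
        (hes.trans_le (min_le_left _ _))
    have ha : ∀ x, ‖φ (x - (ε k) ^ 2 • s) - φ x‖ₑ ≤ ENNReal.ofReal τ := by
      intro x
      rw [← ofReal_norm]
      refine ENNReal.ofReal_le_ofReal ?_
      rw [← dist_eq_norm]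
      refine (hd ?_).le
      rw [dist_eq_norm]
      simpa using hes2
    have hb : ∫⁻ ω, ‖ψ (T (-(ε k • s)) ω) - ψ ω‖ₑ ∂μ ≤ ENNReal.ofReal τ := by
      refine hd' ?_
      rw [dist_zero_right, norm_neg]
      exact hes.trans_le (min_le_right _ _)
    have hest := aux_est (Q := Q) hT hψ (g := g) hφ hCφ hCψ hCg he0 s ha hb
    set D : (Fin N → ℝ) × Ω → ℝ := fun p =>
      (φ (p.1 - ε k ^ 2 • s) * ψ (T ((ε k)⁻¹ • (p.1 - ε k ^ 2 • s)) p.2)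
      - φ p.1 * ψ (T ((ε k)⁻¹ • p.1) p.2)) * g ((ε k ^ 2)⁻¹ • p.1 - s) with hD
    have hsub : ∀ x : Fin N → ℝ, ((ε k) ^ 2)⁻¹ • (x - (ε k) ^ 2 • s) = ((ε k) ^ 2)⁻¹ • x - s := by
      intro x
      rw [smul_sub, smul_smul, inv_mul_cancel₀ (by positivity), one_smul]
    have mshift : Measurable fun p : (Fin N → ℝ) × Ω => (p.1 - (ε k) ^ 2 • s, p.2) := by fun_prop
    have hHsm : Measurable fun p : (Fin N → ℝ) × Ω => H k (p.1 - (ε k) ^ 2 • s) p.2 :=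
      (hHm k).comp mshift
    have hgm : Measurable fun p : (Fin N → ℝ) × Ω => g (((ε k) ^ 2)⁻¹ • p.1 - s) :=
      hg.measurable.comp (by fun_prop)
    have hDeq : D = fun p => H k (p.1 - (ε k) ^ 2 • s) p.2 -
        h k p.1 p.2 * g (((ε k) ^ 2)⁻¹ • p.1 - s) := by
      ext p
      simp only [hD, hH, hh, hsub]
      ring
    have hDm : Measurable D := by
      rw [hDeq]
      exact hHsm.sub ((hhm k).mul hgm)
    have hDb : ∀ p, ‖D p‖ₑ ≤ ENNReal.ofReal CD := by
      intro p
      rw [Real.enorm_eq_ofReal_abs]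
      refine ENNReal.ofReal_le_ofReal ?_
      rw [hDeq]
      refine (abs_sub _ _).trans ?_
      have q1 := hHb k (p.1 - (ε k) ^ 2 • s) p.2
      have q2 : |h k p.1 p.2 * g (((ε k) ^ 2)⁻¹ • p.1 - s)| ≤ Cφ * Cψ * Cg := by
        rw [abs_mul]
        exact mul_le_mul (hhb _ _ _) (hCg _) (abs_nonneg _) (by positivity)
      rw [hCD]; linarith
    have hKK : K₁ k s - K₂ k s = ∫ p, u k p.1 p.2 * D p ∂((volume.restrict Q).prod μ) := by
      have j1 : Integrable (fun p : (Fin N → ℝ) × Ω => u k p.1 p.2 * H k (p.1 - (ε k) ^ 2 • s) p.2)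
          (volume.prod μ) :=
        (hui k).mul_bdd (c := Cφ * Cψ * Cg) hHsm.aestronglyMeasurable
          (Eventually.of_forall fun q => hHb _ _ _)
      have j2 : Integrable (fun p : (Fin N → ℝ) × Ω =>
          u k p.1 p.2 * h k p.1 p.2 * g (((ε k) ^ 2)⁻¹ • p.1 - s)) (volume.prod μ) :=
        ((hui k).mul_bdd (c := Cφ * Cψ) (hhm k).aestronglyMeasurable
          (Eventually.of_forall fun q => hhb _ _ _)).mul_bdd (c := Cg) hgm.aestronglyMeasurable
          (Eventually.of_forall fun q => hCg _)
      rw [hK₁, hK₂]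
      simp only
      rw [← integral_sub j1 j2, aux_ext Q, setIntegral_eq_integral_of_forall_compl_eq_zero]
      · refine integral_congr_ae (Eventually.of_forall fun p => ?_)
        simp only [hDeq]
        ring
      · intro p hp
        have : p.1 ∉ Q := fun h' => hp ⟨h', trivial⟩
        rw [huzero k _ this, zero_mul]
    have hfin : ‖K₁ k s - K₂ k s‖ₑ ≤ ENNReal.ofReal η := by
      rw [hKK]
      calc ‖∫ p, u k p.1 p.2 * D p ∂((volume.restrict Q).prod μ)‖ₑ
          ≤ ∫⁻ p, ‖u k p.1 p.2 * D p‖ₑ ∂((volume.restrict Q).prod μ) :=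
            enorm_integral_le_lintegral_enorm _
        _ = ∫⁻ p, ‖u k p.1 p.2‖ₑ * ‖D p‖ₑ ∂((volume.restrict Q).prod μ) := by
            simp only [enorm_mul]
        _ ≤ ENNReal.ofReal M * ∫⁻ p, ‖D p‖ₑ ∂((volume.restrict Q).prod μ) +
            ENNReal.ofReal η' * ENNReal.ofReal CD :=
            aux_bound hΦ (hδ k) hη'0 hM0 hδ0 hM (fun p => ‖D p‖ₑ) hDm.enorm _
              ENNReal.ofReal_ne_top hDb
        _ ≤ ENNReal.ofReal M * (ENNReal.ofReal Cg * ((ENNReal.ofReal Cψ * ENNReal.ofReal τ +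
              ENNReal.ofReal Cφ * ENNReal.ofReal τ) * volume Q)) +
            ENNReal.ofReal η' * ENNReal.ofReal CD := by
            gcongr
        _ = ENNReal.ofReal (L * τ + CD * η') :=
            aux_arith2 hM0 hCg0 hCψ0 hCφ0 hτ0.le hη'0.le hCD0 hQv.ne
        _ ≤ ENNReal.ofReal η := by
            refine ENNReal.ofReal_le_ofReal ?_
            have e1 : L * τ ≤ η / 2 := aux_arith hL0 hη
            have e2 : CD * η' ≤ η / 2 := aux_arith hCD0 hη
            linarith
    rw [← ofReal_norm] at hfin
    exact (ENNReal.ofReal_le_ofReal_iff hη.le).1 hfin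
  -- conclusion
  have hdiff : Tendsto (fun k => (c * ∫ s in B, K₁ k s) - (c * ∫ s in B, K₂ k s)) atTop (𝓝 0) := by
    rw [Metric.tendsto_nhds]
    intro θ hθ
    set W : ℝ := |c| * (volume B).toReal with hW
    have hW0 : 0 ≤ W := by positivity
    have hη : 0 < θ / (2 * (W + 1)) := by positivity
    filter_upwards [hsmall _ hη] with k hk
    have b1 : ‖∫ s in B, (K₁ k s - K₂ k s)‖ ≤ θ / (2 * (W + 1)) * (volume B).toReal :=
      norm_setIntegral_le_of_norm_le_const hBv hk
    rw [integral_sub (F1 k).2 (F2 k).2] at b1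
    rw [dist_zero_right, ← mul_sub, norm_mul]
    have b2 := aux_arith hW0 hθ
    have b3 : ‖c‖ * ‖(∫ s in B, K₁ k s) - ∫ s in B, K₂ k s‖ ≤
        |c| * (θ / (2 * (W + 1)) * (volume B).toReal) :=
      mul_le_mul_of_nonneg_left b1 (abs_nonneg c)
    have b4 : |c| * (θ / (2 * (W + 1)) * (volume B).toReal) = W * (θ / (2 * (W + 1))) := by
      rw [hW]; ring
    linarith
  have hmain2 := hmain.add hdiff
  rw [add_zero] at hmain2
  refine hmain2.congr fun k => ?_
  rw [hII k, hI k]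
  ring
end
end

section
/- Let Φ be a Young function such that Φ and its conjugate Φ̃ are of class Δ₂, let {T(x)}_{x∈ℝ^N} be an N-dimensional dynamical system on Ω, and let f satisfy (H₁)–(H₄). Let v : \bar{Q}×Ω×ℝ^N → ℝ^N be a vector field each of whose components is a finite sum Σ_i φ_i(x)ψ_i(ω)g_i(y) with φ_i continuous on \bar{Q}, ψ_i : Ω → ℝ bounded measurable, and g_i : ℝ^N → ℝ continuous ℤ^N-periodic. Then lim_{ε→0⁺} ∫_{Q×Ω} f(x, T(x/ε)ω, x/ε², v(x, T(x/ε)ω, x/ε²)) dx dμ(ω) = ∫_{Q×Ω×Y} f(x, ω, y, v(x,ω,y)) dx dμ(ω) dy. -/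
open MeasureTheory Filter Topology ENNReal

noncomputable section

lemma periodic_shift {N : ℕ} (g : (Fin N → ℝ) → ℝ) (hg : ZPeriodic g) (a : Fin N → ℝ) :
    ∫ z in Ycube N, g (a + z) = ∫ z in Ycube N, g z := by
  have hY : Ycube N =ᵐ[volume] ZSpan.fundamentalDomain (Pi.basisFun ℝ (Fin N)) := by
    rw [ZSpan.fundamentalDomain_pi_basisFun]
    exact (Measure.univ_pi_Ico_ae_eq_Icc (f := fun _ : Fin N => (0:ℝ)) (g := fun _ => 1)).symm
  rw [setIntegral_congr_set hY, setIntegral_congr_set hY]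
  have h1 := ZSpan.isAddFundamentalDomain' (Pi.basisFun ℝ (Fin N)) volume
  have h2 := h1.vadd_of_comm a
  have hinv : ∀ (k : (Submodule.span ℤ (Set.range (Pi.basisFun ℝ (Fin N)))).toAddSubgroup)
      (x : Fin N → ℝ), g (k +ᵥ x) = g x := by
    rintro ⟨k, hk⟩ x
    have hk' : ∀ i, ∃ c : ℤ, (c : ℝ) = k i := by
      have := (Module.Basis.mem_span_iff_repr_mem ℤ (Pi.basisFun ℝ (Fin N)) k).1 hk
      intro i
      simpa using this i
    choose c hc using hk'
    have : k = fun i => (c i : ℝ) := by ext i; exact (hc i).symm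
    rw [← hg x c, ← this, add_comm]
    rfl
  have : Countable (Submodule.span ℤ (Set.range (Pi.basisFun ℝ (Fin N)))).toAddSubgroup :=
    inferInstanceAs (Countable (Submodule.span ℤ (Set.range (Pi.basisFun ℝ (Fin N)))))
  rw [h1.setIntegral_eq h2 hinv]
  have := (measurePreserving_add_left (volume : Measure (Fin N → ℝ)) a).setIntegral_image_emb
    (measurableEmbedding_addLeft a) g (ZSpan.fundamentalDomain (Pi.basisFun ℝ (Fin N)))
  rw [← this]
  rfl

lemma vol_Y (N : ℕ) : (volume : Measure (Fin N → ℝ)) (Ycube N) = 1 := by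
  simp [Ycube, Real.volume_Icc_pi]

lemma exists_int_shift {N : ℕ} (y : Fin N → ℝ) : ∃ k : Fin N → ℤ,
    (y + fun i => (k i : ℝ)) ∈ Ycube N := by
  refine ⟨fun i => -⌊y i⌋, ?_, ?_⟩
  · intro i; simp; exact Int.floor_le _
  · intro i; simp; linarith [Int.lt_floor_add_one (y i)]

lemma norm_le_of_Y {N : ℕ} {z : Fin N → ℝ} (hz : z ∈ Ycube N) : ‖z‖ ≤ 1 := by
  rw [pi_norm_le_iff_of_nonneg zero_le_one]
  intro i
  rw [Real.norm_eq_abs, abs_le]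
  exact ⟨by have := hz.1 i; simp at this; linarith, hz.2 i⟩

lemma avg_cont {N : ℕ} (G : (Fin N → ℝ) → (Fin N → ℝ) → ℝ)
    (hG : Continuous (Function.uncurry G)) (C : ℝ) (hC : ∀ x y, |G x y| ≤ C)
    (Q : Set (Fin N → ℝ)) (hQ : Bornology.IsBounded Q)
    (h0 : ∀ x, x ∉ Q → ∀ y, G x y = 0) (hper : ∀ x, ZPeriodic (G x)) :
    Tendsto (fun δ : ℝ => ∫ x, G x (δ⁻¹ • x)) (nhdsWithin 0 (Set.Ioi 0))
      (nhds (∫ x, ∫ y in Ycube N, G x y)) := by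
  obtain ⟨R, hR⟩ := hQ.subset_closedBall 0
  have hC0 : 0 ≤ C := (abs_nonneg _).trans (hC 0 0)
  have hYm : MeasurableSet (Ycube N) := measurableSet_Icc
  set ν := (volume : Measure (Fin N → ℝ)).restrict (Ycube N) with hν
  have : IsProbabilityMeasure ν := ⟨by simp [hν, vol_Y]⟩
  have hz : ∀ᵐ p ∂((volume : Measure (Fin N → ℝ)).prod ν), p.2 ∈ Ycube N := by
    have : ∀ᵐ z ∂ν, z ∈ Ycube N := ae_restrict_mem hYm
    exact Measure.quasiMeasurePreserving_snd.ae this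
  let B : (Fin N → ℝ) × (Fin N → ℝ) → ℝ :=
    (Metric.closedBall (0 : Fin N → ℝ) (R + 1) ×ˢ Set.univ).indicator (fun _ => C)
  have hBi : Integrable B ((volume : Measure (Fin N → ℝ)).prod ν) := by
    refine (integrable_indicator_iff (Metric.isClosed_closedBall.measurableSet.prod .univ)).2 ?_
    refine integrableOn_const ?_
    rw [Measure.prod_prod]
    simpa using (isCompact_closedBall (0 : Fin N → ℝ) (R + 1)).measure_lt_top.ne
  have hB : ∀ (x w y z : Fin N → ℝ), ‖w‖ ≤ 1 → |G (x + w) y| ≤ B (x, z) := by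
    intro x w y z hw
    by_cases hx : x ∈ Metric.closedBall (0 : Fin N → ℝ) (R + 1)
    · have : B (x, z) = C := by simp only [B]; rw [Set.indicator_of_mem]; exact ⟨hx, trivial⟩
      rw [this]; exact hC _ _
    · have : B (x, z) = 0 := by
        simp only [B]; rw [Set.indicator_of_notMem]; exact fun h => hx h.1
      rw [this, h0, abs_zero]
      intro h
      have h3 := hR h
      rw [mem_closedBall_zero_iff] at hx h3
      apply hx
      calc ‖x‖ = ‖(x + w) - w‖ := by simp
        _ ≤ ‖x + w‖ + ‖w‖ := norm_sub_le _ _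
        _ ≤ R + 1 := by linarith
  -- integrability
  have hwn : ∀ δ : ℝ, 0 < δ → δ ≤ 1 → ∀ z ∈ Ycube N, ‖δ • z‖ ≤ 1 := by
    intro δ h h' z hz
    rw [norm_smul, Real.norm_eq_abs, abs_of_pos h]
    have := norm_le_of_Y hz
    have := norm_nonneg z
    nlinarith
  have hI1 : ∀ δ : ℝ, 0 < δ → δ ≤ 1 →
      Integrable (fun p : (Fin N → ℝ) × (Fin N → ℝ) => G (p.1 + δ • p.2) (δ⁻¹ • p.1 + p.2))
        ((volume : Measure (Fin N → ℝ)).prod ν) := by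
    intro δ h h'
    refine hBi.mono' ?_ ?_
    · have : Continuous (fun p : (Fin N → ℝ) × (Fin N → ℝ) =>
        Function.uncurry G (p.1 + δ • p.2, δ⁻¹ • p.1 + p.2)) := hG.comp (by fun_prop)
      exact this.aestronglyMeasurable
    · filter_upwards [hz] with p hp
      exact hB _ _ _ _ (hwn δ h h' _ hp)
  have hI2 : ∀ δ : ℝ,
      Integrable (fun p : (Fin N → ℝ) × (Fin N → ℝ) => G (p.1) (δ⁻¹ • p.1 + p.2))
        ((volume : Measure (Fin N → ℝ)).prod ν) := by
    intro δ
    refine hBi.mono' ?_ ?_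
    · have : Continuous (fun p : (Fin N → ℝ) × (Fin N → ℝ) =>
        Function.uncurry G (p.1, δ⁻¹ • p.1 + p.2)) := hG.comp (by fun_prop)
      exact this.aestronglyMeasurable
    · filter_upwards [hz] with p hp
      simpa using hB p.1 0 (δ⁻¹ • p.1 + p.2) p.2 (by simp)
  have hkey : ∀ δ : ℝ, 0 < δ → δ ≤ 1 → ∫ x, G x (δ⁻¹ • x) = (∫ x, ∫ y in Ycube N, G x y) +
      ∫ p : (Fin N → ℝ) × (Fin N → ℝ), (G (p.1 + δ • p.2) (δ⁻¹ • p.1 + p.2)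
        - G (p.1) (δ⁻¹ • p.1 + p.2)) ∂((volume : Measure (Fin N → ℝ)).prod ν) := by
    intro δ h h'
    rw [integral_sub (hI1 δ h h') (hI2 δ), integral_prod_symm _ (hI1 δ h h'),
      integral_prod _ (hI2 δ)]
    have e1 : ∀ x, ∫ z, G x (δ⁻¹ • x + z) ∂ν = ∫ y in Ycube N, G x y :=
      fun x => periodic_shift (G x) (hper x) _
    have e2 : ∀ z : Fin N → ℝ, ∫ x, G (x + δ • z) (δ⁻¹ • x + z) = ∫ x, G x (δ⁻¹ • x) := by
      intro z
      rw [← integral_add_right_eq_self (fun x => G x (δ⁻¹ • x)) (δ • z)]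
      congr 1; ext x
      rw [smul_add, inv_smul_smul₀ h.ne']
    simp only [e1, e2]
    simp
  have hlim : Tendsto (fun δ : ℝ => ∫ p : (Fin N → ℝ) × (Fin N → ℝ),
      (G (p.1 + δ • p.2) (δ⁻¹ • p.1 + p.2)
        - G (p.1) (δ⁻¹ • p.1 + p.2)) ∂((volume : Measure (Fin N → ℝ)).prod ν))
      (nhdsWithin 0 (Set.Ioi 0)) (nhds (∫ p : (Fin N → ℝ) × (Fin N → ℝ), (0:ℝ)
        ∂((volume : Measure (Fin N → ℝ)).prod ν))) := by
    have hev : ∀ᶠ δ : ℝ in nhdsWithin 0 (Set.Ioi 0), 0 < δ ∧ δ ≤ 1 := by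
      filter_upwards [Ioc_mem_nhdsGT (zero_lt_one' ℝ)] with δ h using h
    refine tendsto_integral_filter_of_dominated_convergence (fun p => B p + B p) ?_ ?_
      (hBi.add hBi) ?_
    · filter_upwards [hev] with δ h
      exact ((hI1 δ h.1 h.2).sub (hI2 δ)).aestronglyMeasurable
    · filter_upwards [hev] with δ h
      filter_upwards [hz] with p hp
      refine (norm_sub_le _ _).trans (add_le_add ?_ ?_)
      · exact hB _ _ _ _ (hwn δ h.1 h.2 _ hp)
      · simpa using hB p.1 0 (δ⁻¹ • p.1 + p.2) p.2 (by simp)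
    · refine Eventually.of_forall fun p => ?_
      rw [Metric.tendsto_nhds]
      intro η hη
      have hu : ∀ᶠ x' in 𝓝 p.1, ∀ y ∈ Ycube N, |G x' y - G p.1 y| < η := by
        refine IsCompact.eventually_forall_of_forall_eventually isCompact_Icc ?_
        intro y hy
        have hc : Continuous (fun q : (Fin N → ℝ) × (Fin N → ℝ) =>
            |Function.uncurry G (q.1, q.2) - Function.uncurry G (p.1, q.2)|) := by
          refine ((hG.comp (by fun_prop)).sub (hG.comp (by fun_prop))).abs
        have := hc.tendsto (p.1, y)
        refine this.eventually_lt_const ?_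
        simpa using hη
      have ht : Tendsto (fun δ : ℝ => p.1 + δ • p.2) (nhdsWithin 0 (Set.Ioi 0)) (𝓝 p.1) := by
        have : Continuous (fun δ : ℝ => p.1 + δ • p.2) := by fun_prop
        have := this.tendsto 0
        simp only [zero_smul, add_zero] at this
        exact this.mono_left nhdsWithin_le_nhds
      filter_upwards [ht.eventually hu] with δ h
      obtain ⟨k, hk⟩ := exists_int_shift (δ⁻¹ • p.1 + p.2)
      have := h _ hk
      rw [hper, hper] at this
      simpa using this
  rw [integral_zero] at hlim
  have := hlim.const_add (∫ x, ∫ y in Ycube N, G x y)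
  rw [add_zero] at this
  refine this.congr' ?_
  filter_upwards [Ioc_mem_nhdsGT (zero_lt_one' ℝ)] with δ h
  exact (hkey δ h.1 h.2).symm

lemma avg_open {N : ℕ} (F : (Fin N → ℝ) → (Fin N → ℝ) → ℝ)
    (Q : Set (Fin N → ℝ)) (hQo : IsOpen Q) (hQ : Bornology.IsBounded Q)
    (hQc : Qᶜ.Nonempty)
    (hF : ContinuousOn (Function.uncurry F) (Q ×ˢ Set.univ)) (C : ℝ)
    (hC : ∀ x ∈ Q, ∀ y, |F x y| ≤ C)
    (hper : ∀ x, ZPeriodic (F x)) :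
    Tendsto (fun δ : ℝ => ∫ x in Q, F x (δ⁻¹ • x)) (nhdsWithin 0 (Set.Ioi 0))
      (nhds (∫ x in Q, ∫ y in Ycube N, F x y)) := by
  wlog hC0 : 0 ≤ C generalizing C
  · exact this |C| (fun x hx y => (hC x hx y).trans (le_abs_self C)) (abs_nonneg C)
  let φ : ℕ → (Fin N → ℝ) → ℝ := fun n x => min 1 (n * Metric.infDist x Qᶜ)
  have hφc : ∀ n, Continuous (φ n) := fun n =>
    continuous_const.min (continuous_const.mul (Metric.continuous_infDist_pt _))
  have hφ0 : ∀ n x, 0 ≤ φ n x := fun n x =>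
    le_min zero_le_one (mul_nonneg (Nat.cast_nonneg _) Metric.infDist_nonneg)
  have hφ1 : ∀ n x, φ n x ≤ 1 := fun n x => min_le_left _ _
  have hφQ : ∀ n x, x ∉ Q → φ n x = 0 := by
    intro n x hx
    simp [φ, Metric.infDist_zero_of_mem (show x ∈ Qᶜ from hx)]
  have hφt : ∀ x ∈ Q, Tendsto (fun n => φ n x) atTop (𝓝 1) := by
    intro x hx
    have hp : 0 < Metric.infDist x Qᶜ :=
      (hQo.isClosed_compl.notMem_iff_infDist_pos hQc).1 (by simpa using hx)
    refine tendsto_const_nhds.congr' ?_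
    obtain ⟨n₀, hn₀⟩ := exists_nat_gt (1 / Metric.infDist x Qᶜ)
    filter_upwards [eventually_ge_atTop n₀] with n hn
    have : (n₀ : ℝ) ≤ n := by exact_mod_cast hn
    rw [div_lt_iff₀ hp] at hn₀
    refine (min_eq_left ?_).symm
    nlinarith
  have hQfin : volume Q ≠ ⊤ := hQ.measure_lt_top.ne
  have : IsFiniteMeasure ((volume : Measure (Fin N → ℝ)).restrict Q) := ⟨by simpa using hQ.measure_lt_top⟩
  have hb : ∀ n x y, |φ n x * F x y| ≤ C * φ n x := by
    intro n x y
    by_cases hx : x ∈ Q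
    · rw [abs_mul, abs_of_nonneg (hφ0 n x), mul_comm]
      exact mul_le_mul_of_nonneg_right (hC x hx y) (hφ0 n x)
    · simp [hφQ n x hx]
  have hGc : ∀ n, Continuous (Function.uncurry fun x y => φ n x * F x y) := by
    intro n
    rw [continuous_iff_continuousAt]
    rintro ⟨x, y⟩
    by_cases hx : x ∈ Q
    · have h1 : ContinuousAt (Function.uncurry F) (x, y) :=
        hF.continuousAt ((hQo.prod isOpen_univ).mem_nhds ⟨hx, trivial⟩)
      exact ((hφc n).comp continuous_fst).continuousAt.mul h1
    · have h2 : (Function.uncurry fun x y => φ n x * F x y) (x, y) = 0 := by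
        simp [hφQ n x hx]
      rw [ContinuousAt, h2]
      have h3 : Tendsto (fun p : (Fin N → ℝ) × (Fin N → ℝ) => C * φ n p.1) (𝓝 (x, y)) (𝓝 0) := by
        have : Continuous (fun p : (Fin N → ℝ) × (Fin N → ℝ) => C * φ n p.1) :=
          continuous_const.mul ((hφc n).comp continuous_fst)
        simpa [hφQ n x hx] using this.tendsto (x, y)
      exact squeeze_zero_norm (fun p => hb n p.1 p.2) h3
  have hG := fun n => avg_cont (fun x y => φ n x * F x y) (hGc n) C
    (fun x y => (hb n x y).trans (by nlinarith [hφ1 n x])) Q hQ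
    (fun x hx y => by simp [hφQ n x hx]) (fun x y k => by simp only [hper x y k])
  -- convert to integrals over Q
  have hset : ∀ (n : ℕ) (H : (Fin N → ℝ) → ℝ), ∫ x, φ n x * H x = ∫ x in Q, φ n x * H x := by
    intro n H
    refine (setIntegral_eq_integral_of_forall_compl_eq_zero fun x hx => ?_).symm
    simp [hφQ n x hx]
  have hYb : ∀ x ∈ Q, |∫ y in Ycube N, F x y| ≤ C := by
    intro x hx
    have := norm_setIntegral_le_of_norm_le_const (μ := volume) (s := Ycube N) (f := F x) (C := C)
      (by rw [vol_Y]; simp) (fun y _ => hC x hx y)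
    simpa [Measure.real, vol_Y] using this
  have hFm : ∀ δ : ℝ, AEStronglyMeasurable (fun x => F x (δ⁻¹ • x)) (volume.restrict Q) := by
    intro δ
    refine ContinuousOn.aestronglyMeasurable ?_ hQo.measurableSet
    exact hF.comp (f := fun x => (x, δ⁻¹ • x)) (by fun_prop) (fun x hx => ⟨hx, trivial⟩)
  have hYm : AEStronglyMeasurable (fun x => ∫ y in Ycube N, F x y) (volume.restrict Q) := by
    refine ContinuousOn.aestronglyMeasurable ?_ hQo.measurableSet
    have : IsFiniteMeasure ((volume : Measure (Fin N → ℝ)).restrict (Ycube N)) := ⟨by simp [vol_Y]⟩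
    refine continuousOn_of_dominated (bound := fun _ => C) ?_ ?_ (integrable_const _) ?_
    · intro x hx
      have : Continuous (F x) := by
        rw [← continuousOn_univ]
        exact hF.comp (f := fun y => (x, y)) (by fun_prop) (fun y _ => ⟨hx, trivial⟩)
      exact this.aestronglyMeasurable
    · intro x hx
      exact Eventually.of_forall fun y => hC x hx y
    · refine Eventually.of_forall fun y => ?_
      exact hF.comp (f := fun x => (x, y)) (by fun_prop) (fun x hx => ⟨hx, trivial⟩)
  have hφi : ∀ n, Integrable (φ n) (volume.restrict Q) := fun n =>
    (integrable_const (1:ℝ)).mono' (hφc n).aestronglyMeasurable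
      (Eventually.of_forall fun x => by
        rw [Real.norm_eq_abs, abs_of_nonneg (hφ0 n x)]; exact hφ1 n x)
  -- general estimate
  have hest : ∀ (n : ℕ) (H : (Fin N → ℝ) → ℝ), (∀ x ∈ Q, |H x| ≤ C) →
      AEStronglyMeasurable H (volume.restrict Q) →
      |(∫ x in Q, H x) - ∫ x in Q, φ n x * H x| ≤ ∫ x in Q, C * (1 - φ n x) := by
    intro n H hH hHm
    have hHQ : ∀ᵐ x ∂(volume.restrict Q), |H x| ≤ C := by
      filter_upwards [ae_restrict_mem hQo.measurableSet] with x hx using hH x hx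
    have i1 : Integrable H (volume.restrict Q) := (integrable_const C).mono' hHm hHQ
    have i2 : Integrable (fun x => φ n x * H x) (volume.restrict Q) := by
      refine (integrable_const C).mono' ((hφc n).aestronglyMeasurable.mul hHm) ?_
      filter_upwards [hHQ] with x hx
      rw [norm_mul, Real.norm_eq_abs, Real.norm_eq_abs, abs_of_nonneg (hφ0 n x)]
      nlinarith [hφ0 n x, hφ1 n x, abs_nonneg (H x)]
    rw [← integral_sub i1 i2]
    rw [← Real.norm_eq_abs]
    have i3 : Integrable (fun x => C * (1 - φ n x)) (volume.restrict Q) :=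
      ((integrable_const (1:ℝ)).sub (hφi n)).const_mul C
    refine norm_integral_le_of_norm_le i3 ?_
    filter_upwards [hHQ] with x hx
    have : H x - φ n x * H x = (1 - φ n x) * H x := by ring
    rw [this, norm_mul, Real.norm_eq_abs, Real.norm_eq_abs, abs_of_nonneg (by linarith [hφ1 n x])]
    rw [mul_comm]
    exact mul_le_mul_of_nonneg_right hx (by linarith [hφ1 n x])
  have hlim0 : Tendsto (fun n => ∫ x in Q, C * (1 - φ n x)) atTop (𝓝 0) := by
    have : Tendsto (fun n => ∫ x in Q, C * (1 - φ n x)) atTop (𝓝 (∫ x in Q, (0:ℝ))) := by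
      refine tendsto_integral_of_dominated_convergence (fun _ => C)
        (fun n => (continuous_const.mul (continuous_const.sub (hφc n))).aestronglyMeasurable)
        (integrable_const _) ?_ ?_
      · intro n
        refine Eventually.of_forall fun x => ?_
        rw [norm_mul, Real.norm_eq_abs, Real.norm_eq_abs, abs_of_nonneg hC0,
          abs_of_nonneg (by linarith [hφ1 n x])]
        nlinarith [hφ0 n x]
      · filter_upwards [ae_restrict_mem hQo.measurableSet] with x hx
        have := ((hφt x hx).const_sub 1).const_mul C
        simpa using this
    simpa using this
  refine TendstoUniformly.tendsto_of_eventually_tendsto (p := atTop)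
    (F := fun (n : ℕ) (δ : ℝ) => ∫ x in Q, φ n x * F x (δ⁻¹ • x))
    (L := fun n => ∫ x in Q, φ n x * ∫ y in Ycube N, F x y) ?_ ?_ ?_
  · rw [Metric.tendstoUniformly_iff]
    intro η hη
    filter_upwards [hlim0.eventually_lt_const hη] with n hn δ
    exact (hest n _ (fun x hx => hC x hx _) (hFm δ)).trans_lt hn
  · refine Eventually.of_forall fun n => ?_
    have := hG n
    simp only [integral_const_mul] at this
    rw [hset n] at this
    refine this.congr fun δ => hset n _
  · rw [tendsto_iff_norm_sub_tendsto_zero]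
    refine squeeze_zero (fun _ => norm_nonneg _) (fun n => ?_) hlim0
    rw [norm_sub_rev]
    exact hest n _ hYb hYm

lemma clean_f {N : ℕ} {Ω : Type*} [MeasurableSpace Ω] (μ : Measure Ω)
    [IsProbabilityMeasure μ] (Φ : ℝ → ℝ) (hΦ : IsYoung Φ)
    (f : (Fin N → ℝ) → Ω → (Fin N → ℝ) → (Fin N → ℝ) → ℝ)
    (hfmeas : ∀ x lam : Fin N → ℝ, Measurable fun p : Ω × (Fin N → ℝ) => f x p.1 p.2 lam)
    (hfcont : ∀ᵐ ω ∂μ, Continuous fun q : (Fin N → ℝ) × (Fin N → ℝ) × (Fin N → ℝ) =>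
      f q.1 ω q.2.1 q.2.2)
    (c₁ c₂ : ℝ) (hc₁ : 0 < c₁) (hc₂ : 0 < c₂)
    (hH3 : ∀ᵐ p ∂(μ.prod (volume : Measure (Fin N → ℝ))), ∀ x lam : Fin N → ℝ,
      c₁ * Φ (enorm2 lam) ≤ f x p.1 p.2 lam ∧ f x p.1 p.2 lam ≤ c₂ * (1 + Φ (enorm2 lam)))
    (hH4 : ∀ᵐ ω ∂μ, ∀ (x y lam : Fin N → ℝ) (k : Fin N → ℤ),
      f x ω (y + fun i => (k i : ℝ)) lam = f x ω y lam) :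
    ∃ f0 : (Fin N → ℝ) × (Fin N → ℝ) × (Fin N → ℝ) → Ω → ℝ,
      Measurable (Function.uncurry f0) ∧ (∀ ω, Continuous fun q => f0 q ω) ∧
      (∀ᵐ ω ∂μ, ∀ q, f0 q ω = f q.1 ω q.2.1 q.2.2) ∧
      (∀ ω q, 0 ≤ f0 q ω ∧ f0 q ω ≤ c₂ * (1 + Φ (enorm2 q.2.2))) ∧
      (∀ (ω : Ω) (x y lam : Fin N → ℝ) (k : Fin N → ℤ),
        f0 (x, y + (fun i => (k i : ℝ)), lam) ω = f0 (x, y, lam) ω) := by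
  classical
  have hΦ0 : ∀ lam : Fin N → ℝ, 0 ≤ Φ (enorm2 lam) := fun lam =>
    hΦ.2.2.2.2.1 _ (Real.sqrt_nonneg _)
  have hgood : ∀ᵐ ω ∂μ, (Continuous fun q : (Fin N → ℝ) × (Fin N → ℝ) × (Fin N → ℝ) =>
      f q.1 ω q.2.1 q.2.2) ∧ (∀ x y lam : Fin N → ℝ,
        0 ≤ f x ω y lam ∧ f x ω y lam ≤ c₂ * (1 + Φ (enorm2 lam))) ∧
      ∀ (x y lam : Fin N → ℝ) (k : Fin N → ℤ),
      f x ω (y + fun i => (k i : ℝ)) lam = f x ω y lam := by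
    filter_upwards [hfcont, hH4, Measure.ae_ae_of_ae_prod hH3] with ω h1 h2 h3
    refine ⟨h1, fun x y lam => ?_, h2⟩
    have hc : Continuous fun y => f x ω y lam :=
      h1.comp (f := fun y => (x, y, lam)) (by fun_prop)
    have hcl : IsClosed {y | f x ω y lam ∈ Set.Icc 0 (c₂ * (1 + Φ (enorm2 lam)))} :=
      isClosed_Icc.preimage hc
    have hd : Dense {y | f x ω y lam ∈ Set.Icc 0 (c₂ * (1 + Φ (enorm2 lam)))} := by
      refine Measure.dense_of_ae (μ := volume) ?_
      filter_upwards [h3] with y hy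
      exact ⟨(mul_nonneg hc₁.le (hΦ0 lam)).trans (hy x lam).1, (hy x lam).2⟩
    have := hd.closure_eq
    rw [hcl.closure_eq] at this
    have hy : y ∈ {y | f x ω y lam ∈ Set.Icc 0 (c₂ * (1 + Φ (enorm2 lam)))} := by
      rw [this]; trivial
    exact hy
  set S : Set Ω := (toMeasurable μ {ω | ¬ ((Continuous fun q : (Fin N → ℝ) × (Fin N → ℝ) × (Fin N → ℝ) =>
      f q.1 ω q.2.1 q.2.2) ∧ (∀ x y lam : Fin N → ℝ,
        0 ≤ f x ω y lam ∧ f x ω y lam ≤ c₂ * (1 + Φ (enorm2 lam))) ∧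
      ∀ (x y lam : Fin N → ℝ) (k : Fin N → ℤ),
      f x ω (y + fun i => (k i : ℝ)) lam = f x ω y lam)})ᶜ with hS
  have hSm : MeasurableSet S := (measurableSet_toMeasurable _ _).compl
  have hSae : ∀ᵐ ω ∂μ, ω ∈ S := by
    rw [ae_iff]
    simp only [hS, Set.mem_compl_iff, not_not, Set.ofPred_mem_eq, measure_toMeasurable]
    exact ae_iff.1 hgood
  have hSg := fun ω (h : ω ∈ S) => not_not.1 (fun h' => h (subset_toMeasurable μ _ h'))
  have hmem : ∀ (q : (Fin N → ℝ) × (Fin N → ℝ) × (Fin N → ℝ)) ω, ω ∈ S →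
      S.indicator (fun ω => f q.1 ω q.2.1 q.2.2) ω = f q.1 ω q.2.1 q.2.2 :=
    fun q ω h => Set.indicator_of_mem h _
  have hnm : ∀ (q : (Fin N → ℝ) × (Fin N → ℝ) × (Fin N → ℝ)) ω, ω ∉ S →
      S.indicator (fun ω => f q.1 ω q.2.1 q.2.2) ω = 0 :=
    fun q ω h => Set.indicator_of_notMem h _
  have hcont : ∀ ω, Continuous fun q : (Fin N → ℝ) × (Fin N → ℝ) × (Fin N → ℝ) =>
      S.indicator (fun ω => f q.1 ω q.2.1 q.2.2) ω := by
    intro ω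
    by_cases h : ω ∈ S
    · simp only [hmem _ ω h]; exact (hSg ω h).1
    · simp only [hnm _ ω h]; exact continuous_const
  refine ⟨fun q => S.indicator (fun ω => f q.1 ω q.2.1 q.2.2), ?_, hcont, ?_, ?_, ?_⟩
  · refine measurable_uncurry_of_continuous_of_measurable hcont fun q => ?_
    exact ((hfmeas q.1 q.2.2).comp (measurable_id.prodMk measurable_const)).indicator hSm
  · filter_upwards [hSae] with ω h q using hmem q ω h
  · intro ω q
    by_cases h : ω ∈ S
    · simp only [hmem q ω h]; exact (hSg ω h).2.1 _ _ _
    · simp only [hnm q ω h]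
      exact ⟨le_rfl, mul_nonneg hc₂.le (by linarith [hΦ0 q.2.2])⟩
  · intro ω x y lam k
    by_cases h : ω ∈ S
    · exact (hmem _ ω h).trans (((hSg ω h).2.2 _ _ _ _).trans (hmem (x, y, lam) ω h).symm)
    · exact (hnm _ ω h).trans (hnm _ ω h).symm

/-- convergence of oscillating energies for admissible test vector fields. -/
theorem stmt5 {N : ℕ} (hN : 1 ≤ N) {Ω : Type*} [MeasurableSpace Ω] (μ : Measure Ω)
    [IsProbabilityMeasure μ]
    (Φ : ℝ → ℝ) (hΦ : IsYoung Φ) (hΦ2 : Delta2 Φ) (hΦc2 : Delta2 (conjY Φ))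
    (T : (Fin N → ℝ) → Ω → Ω) (hT : IsDynSys μ T)
    (Q : Set (Fin N → ℝ)) (hQo : IsOpen Q) (hQb : Bornology.IsBounded Q)
    (f : (Fin N → ℝ) → Ω → (Fin N → ℝ) → (Fin N → ℝ) → ℝ)
    (hfmeas : ∀ x lam : Fin N → ℝ, Measurable fun p : Ω × (Fin N → ℝ) => f x p.1 p.2 lam)
    (hfcont : ∀ᵐ ω ∂μ, Continuous fun q : (Fin N → ℝ) × (Fin N → ℝ) × (Fin N → ℝ) =>
      f q.1 ω q.2.1 q.2.2)
    (hH1 : ∃ ϖ : ℝ → ℝ, Continuous ϖ ∧ ϖ 0 = 0 ∧ (∀ t, 0 ≤ ϖ t) ∧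
      ∃ a : (Fin N → ℝ) → ℝ, LocallyIntegrable a volume ∧
        ∀ᵐ p ∂(μ.prod (volume : Measure (Fin N → ℝ))), ∀ x x' lam : Fin N → ℝ,
          |f x p.1 p.2 lam - f x' p.1 p.2 lam| ≤ ϖ (enorm2 (x - x')) * (a p.2 + f x p.1 p.2 lam))
    (hH2 : ∀ᵐ p ∂(μ.prod (volume : Measure (Fin N → ℝ))), ∀ x : Fin N → ℝ,
      StrictConvexOn ℝ Set.univ (f x p.1 p.2))
    (c₁ c₂ : ℝ) (hc₁ : 0 < c₁) (hc₂ : 0 < c₂)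
    (hH3 : ∀ᵐ p ∂(μ.prod (volume : Measure (Fin N → ℝ))), ∀ x lam : Fin N → ℝ,
      c₁ * Φ (enorm2 lam) ≤ f x p.1 p.2 lam ∧ f x p.1 p.2 lam ≤ c₂ * (1 + Φ (enorm2 lam)))
    (hH4 : ∀ᵐ ω ∂μ, ∀ (x y lam : Fin N → ℝ) (k : Fin N → ℤ),
      f x ω (y + fun i => (k i : ℝ)) lam = f x ω y lam)
    (m : ℕ) (φv : Fin N → Fin m → (Fin N → ℝ) → ℝ) (ψv : Fin N → Fin m → Ω → ℝ)
    (gv : Fin N → Fin m → (Fin N → ℝ) → ℝ)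
    (hφv : ∀ j i, ContinuousOn (φv j i) (closure Q))
    (hψv : ∀ j i, Measurable (ψv j i) ∧ ∃ C : ℝ, ∀ ω, |ψv j i ω| ≤ C)
    (hgv : ∀ j i, Continuous (gv j i) ∧ ZPeriodic (gv j i)) :
    Tendsto
      (fun ε : ℝ => ∫ x in Q, (∫ ω,
        f x (T (ε⁻¹ • x) ω) ((ε ^ 2)⁻¹ • x)
          (fun j => ∑ i, φv j i x * ψv j i (T (ε⁻¹ • x) ω) * gv j i ((ε ^ 2)⁻¹ • x)) ∂μ))
      (nhdsWithin 0 (Set.Ioi 0))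
      (nhds (∫ x in Q, (∫ ω, (∫ y in Ycube N,
        f x ω y (fun j => ∑ i, φv j i x * ψv j i ω * gv j i y)) ∂μ))) := by
  obtain ⟨hT0, hTa, hTm, -⟩ := hT
  obtain ⟨f0, hf0m, hf0c, hf0e, hf0b, hf0p⟩ :=
    clean_f μ Φ hΦ f hfmeas hfcont c₁ c₂ hc₁ hc₂ hH3 hH4
  set v : (Fin N → ℝ) → Ω → (Fin N → ℝ) → (Fin N → ℝ) :=
    fun x ω y j => ∑ i, φv j i x * ψv j i ω * gv j i y with hv
  -- bounds on v
  have hgb : ∀ j i, ∃ D : ℝ, ∀ y, |gv j i y| ≤ D := by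
    intro j i
    obtain ⟨D, hD⟩ := (isCompact_Icc (a := (0 : Fin N → ℝ)) (b := 1)).exists_bound_of_continuousOn
      (hgv j i).1.continuousOn
    refine ⟨D, fun y => ?_⟩
    obtain ⟨k, hk⟩ := exists_int_shift y
    rw [← (hgv j i).2 y k]
    exact hD _ hk
  have hφb : ∀ j i, ∃ A : ℝ, ∀ x ∈ Q, |φv j i x| ≤ A := by
    intro j i
    obtain ⟨D, hD⟩ := hQb.isCompact_closure.exists_bound_of_continuousOn (hφv j i)
    exact ⟨D, fun x hx => hD x (subset_closure hx)⟩
  choose A hA using hφb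
  choose D hD using hgb
  choose B hB using fun j i => (hψv j i).2
  have hvb : ∀ x ∈ Q, ∀ ω y j, |v x ω y j| ≤ ∑ i, A j i * B j i * D j i := by
    intro x hx ω y j
    refine (Finset.abs_sum_le_sum_abs _ _).trans (Finset.sum_le_sum fun i _ => ?_)
    rw [abs_mul, abs_mul]
    have h1 := hA j i x hx
    have h2 := hB j i ω
    have h3 := hD j i y
    have h1' := (abs_nonneg _).trans h1
    have h2' := (abs_nonneg _).trans h2
    gcongr
  obtain ⟨M, hM⟩ : ∃ M, ∀ t ∈ Set.Icc 0 (Real.sqrt (∑ j, (∑ i, A j i * B j i * D j i) ^ 2)),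
      ‖Φ t‖ ≤ M := isCompact_Icc.exists_bound_of_continuousOn (hΦ.1.mono fun t ht => ht.1)
  have hfb : ∀ x ∈ Q, ∀ ω y, |f0 (x, y, v x ω y) ω| ≤ c₂ * (1 + M) := by
    intro x hx ω y
    rw [abs_of_nonneg (hf0b _ _).1]
    refine (hf0b _ _).2.trans ?_
    have : ‖Φ (enorm2 (v x ω y))‖ ≤ M := by
      refine hM _ ⟨Real.sqrt_nonneg _, Real.sqrt_le_sqrt (Finset.sum_le_sum fun j _ => ?_)⟩
      exact sq_le_sq' (by linarith [(abs_le.1 (hvb x hx ω y j)).1]) (abs_le.1 (hvb x hx ω y j)).2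
    have := (le_abs_self _).trans this
    simp only
    gcongr
  -- continuity and measurability of v
  have hvc : ∀ ω, ContinuousOn (fun p : (Fin N → ℝ) × (Fin N → ℝ) => v p.1 ω p.2)
      (Q ×ˢ Set.univ) := by
    intro ω
    refine continuousOn_pi.2 fun j => continuousOn_finsetSum _ fun i _ => ?_
    refine ContinuousOn.mul (ContinuousOn.mul ?_ continuousOn_const) ?_
    · exact (hφv j i).comp continuousOn_fst fun p hp => subset_closure hp.1
    · exact ((hgv j i).1.comp continuous_snd).continuousOn
  have hvm : ∀ x, Measurable (fun p : Ω × (Fin N → ℝ) => v x p.1 p.2) := by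
    intro x
    refine measurable_pi_lambda _ fun j => Finset.measurable_fun_sum _ fun i _ => ?_
    exact (((hψv j i).1.comp measurable_fst).const_mul _).mul
      ((hgv j i).1.measurable.comp measurable_snd)
  have hfm : ∀ x, Measurable (fun p : Ω × (Fin N → ℝ) => f0 (x, p.2, v x p.1 p.2) p.1) := by
    intro x
    have := hvm x
    exact hf0m.comp (f := fun p : Ω × (Fin N → ℝ) => ((x, p.2, v x p.1 p.2), p.1)) (by fun_prop)
  let F : (Fin N → ℝ) → (Fin N → ℝ) → ℝ := fun x y => ∫ ω, f0 (x, y, v x ω y) ω ∂μ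
  have hFc : ContinuousOn (Function.uncurry F) (Q ×ˢ Set.univ) := by
    refine continuousOn_of_dominated (F := fun (p : (Fin N → ℝ) × (Fin N → ℝ)) ω =>
      f0 (p.1, p.2, v p.1 ω p.2) ω) (bound := fun _ => c₂ * (1 + M)) ?_ ?_ (integrable_const _) ?_
    · intro p _
      exact ((hfm p.1).comp (measurable_id.prodMk measurable_const)).aestronglyMeasurable
    · intro p hp
      exact Eventually.of_forall fun ω => hfb p.1 hp.1 ω p.2
    · refine Eventually.of_forall fun ω => ?_
      exact (hf0c ω).comp_continuousOn
        (continuousOn_fst.prodMk (continuousOn_snd.prodMk (hvc ω)))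
  have hFb : ∀ x ∈ Q, ∀ y, |F x y| ≤ c₂ * (1 + M) := by
    intro x hx y
    have := norm_integral_le_of_norm_le_const (μ := μ) (C := c₂ * (1 + M))
      (f := fun ω => f0 (x, y, v x ω y) ω)
      (Eventually.of_forall fun ω => hfb x hx ω y)
    simpa using this
  have hFp : ∀ x, ZPeriodic (F x) := by
    intro x y k
    have : ∀ ω, v x ω (y + fun i => (k i : ℝ)) = v x ω y := by
      intro ω
      ext j
      simp only [hv]
      exact Finset.sum_congr rfl fun i _ => by rw [(hgv j i).2 y k]
    simp only [F, this, hf0p]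
  have : Nonempty (Fin N) := ⟨⟨0, hN⟩⟩
  have hQc : Qᶜ.Nonempty := by
    rw [Set.nonempty_compl]
    rintro rfl
    exact NormedSpace.unbounded_univ ℝ (Fin N → ℝ) hQb
  have hmain := avg_open F Q hQo hQb hQc hFc _ hFb hFp
  have hsq : Tendsto (fun ε : ℝ => ε ^ 2) (nhdsWithin 0 (Set.Ioi 0)) (nhdsWithin 0 (Set.Ioi 0)) := by
    refine tendsto_nhdsWithin_iff.2 ⟨?_, ?_⟩
    · have : Continuous (fun ε : ℝ => ε ^ 2) := by fun_prop
      have := this.tendsto 0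
      simp only [ne_eq, OfNat.ofNat_ne_zero, not_false_eq_true, zero_pow] at this
      exact this.mono_left nhdsWithin_le_nhds
    · filter_upwards [self_mem_nhdsWithin] with ε hε
      exact pow_pos (Set.mem_Ioi.1 hε) 2
  have hmain2 := hmain.comp hsq
  -- the limit
  have hL : (∫ x in Q, (∫ ω, (∫ y in Ycube N,
        f x ω y (fun j => ∑ i, φv j i x * ψv j i ω * gv j i y)) ∂μ)) =
      ∫ x in Q, ∫ y in Ycube N, F x y := by
    refine setIntegral_congr_fun hQo.measurableSet fun x hx => ?_
    have e : (∫ ω, (∫ y in Ycube N,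
        f x ω y (fun j => ∑ i, φv j i x * ψv j i ω * gv j i y)) ∂μ) =
        ∫ ω, (∫ y in Ycube N, f0 (x, y, v x ω y) ω) ∂μ := by
      refine integral_congr_ae ?_
      filter_upwards [hf0e] with ω hω
      simp only [hω, hv]
    have : IsFiniteMeasure ((volume : Measure (Fin N → ℝ)).restrict (Ycube N)) := ⟨by simp [vol_Y]⟩
    refine e.trans (integral_integral_swap ?_)
    refine (integrable_const (c₂ * (1 + M))).mono' (hfm x).aestronglyMeasurable ?_
    exact Eventually.of_forall fun p => hfb x hx p.1 p.2
  rw [hL]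
  refine hmain2.congr fun ε => ?_
  refine integral_congr_ae (Eventually.of_forall fun x => ?_)
  set z := ε⁻¹ • x
  set y := (ε ^ 2)⁻¹ • x
  let e : Ω ≃ᵐ Ω :=
    { toFun := T z
      invFun := T (-z)
      left_inv := fun ω => by
        have := congrFun (hTa (-z) z) ω
        rw [neg_add_cancel, hT0] at this
        exact this.symm
      right_inv := fun ω => by
        have := congrFun (hTa z (-z)) ω
        rw [add_neg_cancel, hT0] at this
        exact this.symm
      measurable_toFun := (hTm z).measurable
      measurable_invFun := (hTm (-z)).measurable }
  have h1 := (hTm z).integral_comp e.measurableEmbedding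
    (fun ω => f x ω y (fun j => ∑ i, φv j i x * ψv j i ω * gv j i y))
  refine Eq.trans ?_ h1.symm
  refine integral_congr_ae ?_
  filter_upwards [hf0e] with ω hω
  simp only [hω, hv]
  rfl
end
end

section
/- Let Φ be a Young function with conjugate Φ̃, and let f satisfy (H₁)–(H₃) with the constant c₂ from (H₃). Then for all measurable vector fields v, w : Q×Ω×ℝ^N → ℝ^N that are ℤ^N-periodic in the last variable, one has ∫_{Q×Ω×Y} |f(x,ω,y,v(x,ω,y)) − f(x,ω,y,w(x,ω,y))| dx dμ(ω) dy ≤ 4Nc₂ · ‖(1 + Φ(2(1+|v|+|w|)))/(1+|v|+|w|)‖_{Φ̃,Q×Ω×Y} · ‖|v−w|‖_{Φ,Q×Ω×Y} (the right-hand side being possibly +∞). -/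
open MeasureTheory Filter Topology ENNReal

noncomputable section

lemma enorm2_eq {N : ℕ} (v : Fin N → ℝ) : enorm2 v = ‖WithLp.toLp 2 v‖ := by
  simp [enorm2, EuclideanSpace.norm_eq]

lemma enorm2_nonneg {N : ℕ} (v : Fin N → ℝ) : 0 ≤ enorm2 v := Real.sqrt_nonneg _

lemma enorm2_sub_comm {N : ℕ} (v w : Fin N → ℝ) : enorm2 (v - w) = enorm2 (w - v) := by
  rw [enorm2_eq, enorm2_eq, WithLp.toLp_sub, WithLp.toLp_sub, norm_sub_rev]

lemma measurable_enorm2 {N : ℕ} : Measurable (enorm2 : (Fin N → ℝ) → ℝ) := by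
  unfold enorm2
  fun_prop

lemma young_mono {Φ : ℝ → ℝ} (h : IsYoung Φ) {s t : ℝ} (hs : 0 ≤ s) (hst : s ≤ t) :
    Φ s ≤ Φ t := by
  obtain ⟨-, hc, h0, -, hnn, -, -⟩ := h
  have ht : 0 ≤ t := hs.trans hst
  rcases ht.eq_or_lt with rfl | htp
  · have : s = 0 := le_antisymm hst hs
    rw [this]
  have := hc.2 (Set.mem_Ici.2 ht) (Set.mem_Ici.2 le_rfl)
    (show 0 ≤ s / t by positivity)
    (show 0 ≤ 1 - s / t by rw [sub_nonneg, div_le_one htp]; exact hst) (by ring)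
  simp only [smul_eq_mul, mul_zero, add_zero, h0] at this
  rw [div_mul_cancel₀ _ htp.ne'] at this
  refine this.trans ?_
  have h1 : s / t ≤ 1 := by rw [div_le_one htp]; exact hst
  nlinarith [hnn t ht]

lemma conjY_bdd {Φ : ℝ → ℝ} (h : IsYoung Φ) (t : ℝ) :
    BddAbove ((fun s => s * t - Φ s) '' Set.Ici 0) := by
  obtain ⟨-, -, -, -, hnn, -, hinf⟩ := h
  obtain ⟨R, hR⟩ := (hinf.eventually_ge_atTop t).exists_forall_of_atTop
  refine ⟨max R 0 * |t| + |R| * |t| + |t|, ?_⟩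
  rintro _ ⟨s, hs, rfl⟩
  have hs : 0 ≤ s := hs
  have hb : 0 ≤ max R 0 * |t| + |R| * |t| + |t| := by positivity
  rcases le_or_gt R s with hRs | hRs
  · rcases hs.eq_or_lt with rfl | hsp
    · have := hnn 0 le_rfl
      simp only [zero_mul, zero_sub]; linarith
    · have := hR s hRs
      rw [le_div_iff₀ hsp] at this
      simp only; linarith
  · have h1 : s * t ≤ s * |t| := mul_le_mul_of_nonneg_left (le_abs_self t) hs
    have h2 : s * |t| ≤ max R 0 * |t| :=
      mul_le_mul_of_nonneg_right (hRs.le.trans (le_max_left _ _)) (abs_nonneg t)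
    have := hnn s hs
    have : 0 ≤ |R| * |t| + |t| := by positivity
    simp only; linarith

lemma young_ineq {Φ : ℝ → ℝ} (h : IsYoung Φ) {s : ℝ} (t : ℝ) (hs : 0 ≤ s) :
    s * t ≤ conjY Φ t + Φ s := by
  have := le_csSup (conjY_bdd h t) ⟨s, hs, rfl⟩
  simp only at this
  unfold conjY
  linarith

lemma conjY_nonneg {Φ : ℝ → ℝ} (h : IsYoung Φ) (t : ℝ) : 0 ≤ conjY Φ t := by
  have := young_ineq h t (le_refl 0)
  rw [h.2.2.1] at this
  linarith

lemma lux_zero {X : Type*} [MeasurableSpace X] {Ψ : ℝ → ℝ} {ν : Measure X} [IsFiniteMeasure ν]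
    {u : X → ℝ} (b : ℝ) (hb : ∀ t, 0 ≤ t → t ≤ Ψ t + b) (hu : Measurable u)
    (h0 : luxNorm Ψ ν u = 0) : ∀ᵐ x ∂ν, u x = 0 := by
  set K : ℝ≥0∞ := 1 + ENNReal.ofReal b * ν Set.univ with hK
  have hKt : K ≠ ∞ := by
    rw [hK]
    exact ENNReal.add_ne_top.2 ⟨by simp, ENNReal.mul_ne_top (by simp) (measure_ne_top _ _)⟩
  have key : ∫⁻ x, ENNReal.ofReal |u x| ∂ν ≤ luxNorm Ψ ν u * K := by
    refine ENNReal.le_mul_of_forall_lt (Or.inr hKt) (Or.inl (by simp [h0])) ?_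
    intro a' ha' b' hb'
    obtain ⟨_, ⟨δ, hδ, rfl, hi⟩, hlt⟩ := sInf_lt_iff.1 ha'
    refine le_trans ?_ (mul_le_mul' hlt.le hb'.le)
    calc ∫⁻ x, ENNReal.ofReal |u x| ∂ν
        ≤ ∫⁻ x, ENNReal.ofReal δ * (ENNReal.ofReal (Ψ (|u x| / δ)) + ENNReal.ofReal b) ∂ν := by
          refine lintegral_mono fun x => ?_
          have h1 := hb (|u x| / δ) (by positivity)
          have h2 : |u x| ≤ δ * (Ψ (|u x| / δ) + b) := by
            rwa [div_le_iff₀' hδ] at h1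
          refine (ENNReal.ofReal_le_ofReal h2).trans ?_
          rw [ENNReal.ofReal_mul hδ.le]
          gcongr
          exact ENNReal.ofReal_add_le
      _ = ENNReal.ofReal δ *
            (∫⁻ x, ENNReal.ofReal (Ψ (|u x| / δ)) ∂ν + ENNReal.ofReal b * ν Set.univ) := by
          rw [lintegral_const_mul' _ _ (by simp), lintegral_add_right _ measurable_const,
            lintegral_const]
      _ ≤ _ := by
          rw [hK]; gcongr
  rw [h0, zero_mul, nonpos_iff_eq_zero, lintegral_eq_zero_iff (by fun_prop)] at key
  filter_upwards [key] with x hx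
  simpa using hx

lemma pointwise_one {N : ℕ} {Φ : ℝ → ℝ} (hΦ : IsYoung Φ) {g : (Fin N → ℝ) → ℝ} {c : ℝ}
    (hc : 0 < c) (hg : ConvexOn ℝ Set.univ g) (hg0 : ∀ l, 0 ≤ g l)
    (hg1 : ∀ l, g l ≤ c * (1 + Φ (enorm2 l))) (v w : Fin N → ℝ) {M : ℝ}
    (hM : M = 1 + enorm2 v + enorm2 w) :
    g v - g w ≤ c * (((1 + Φ (2 * M)) / M) * enorm2 (v - w)) := by
  have hv := enorm2_nonneg v
  have hw := enorm2_nonneg w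
  have hMp : 0 < M := by linarith
  have hΦM : 0 ≤ Φ (2 * M) := hΦ.2.2.2.2.1 _ (by linarith)
  set d := enorm2 (v - w) with hd
  have hd0 : 0 ≤ d := enorm2_nonneg _
  rcases hd0.eq_or_lt with h | hdp
  · have hz : v = w := by
      rw [← h, enorm2_eq] at hd
      have := norm_eq_zero.1 hd.symm
      rw [WithLp.toLp_eq_zero] at this
      exact sub_eq_zero.1 this
    rw [← h, hz]; simp
  · set z : Fin N → ℝ := v + (M / d) • (v - w) with hz
    have hzn : enorm2 z ≤ 2 * M := by
      have : enorm2 z ≤ enorm2 v + (M / d) * d := by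
        rw [hz, enorm2_eq, WithLp.toLp_add, WithLp.toLp_smul]
        refine (norm_add_le _ _).trans ?_
        rw [norm_smul, Real.norm_of_nonneg (by positivity), ← enorm2_eq, ← enorm2_eq]
      rw [div_mul_cancel₀ _ hdp.ne'] at this
      linarith
    have hgz : g z ≤ c * (1 + Φ (2 * M)) := by
      refine (hg1 z).trans ?_
      have := young_mono hΦ (enorm2_nonneg z) hzn
      gcongr
    have hcv := hg.2 (Set.mem_univ z) (Set.mem_univ w) (show 0 ≤ d / (M + d) by positivity)
      (show 0 ≤ M / (M + d) by positivity) (by field_simp; ring)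
    have hvz : (d / (M + d)) • z + (M / (M + d)) • w = v := by
      ext i
      simp only [hz, Pi.add_apply, Pi.smul_apply, Pi.sub_apply, smul_eq_mul]
      field_simp
      ring
    rw [hvz] at hcv
    simp only [smul_eq_mul] at hcv
    have h1 : M / (M + d) * g w ≤ g w := by
      have : M / (M + d) ≤ 1 := by rw [div_le_one (by linarith)]; linarith
      nlinarith [hg0 w]
    have h2 : d / (M + d) * g z ≤ d / M * (c * (1 + Φ (2 * M))) := by
      refine mul_le_mul ?_ hgz (hg0 z) (by positivity)
      gcongr
      linarith
    have h3 : c * (((1 + Φ (2 * M)) / M) * d) = d / M * (c * (1 + Φ (2 * M))) := by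
      field_simp
    rw [h3]; linarith

lemma pointwise_abs {N : ℕ} {Φ : ℝ → ℝ} (hΦ : IsYoung Φ) {g : (Fin N → ℝ) → ℝ} {c : ℝ}
    (hc : 0 < c) (hg : ConvexOn ℝ Set.univ g) (hg0 : ∀ l, 0 ≤ g l)
    (hg1 : ∀ l, g l ≤ c * (1 + Φ (enorm2 l))) (v w : Fin N → ℝ) :
    |g v - g w| ≤ c * (((1 + Φ (2 * (1 + enorm2 v + enorm2 w))) / (1 + enorm2 v + enorm2 w))
      * enorm2 (v - w)) := by
  rw [abs_le]
  constructor
  · have := pointwise_one hΦ hc hg hg0 hg1 w v (M := 1 + enorm2 v + enorm2 w) (by ring)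
    rw [enorm2_sub_comm] at this
    linarith
  · exact pointwise_one hΦ hc hg hg0 hg1 v w rfl

lemma holder_orlicz {X : Type*} [MeasurableSpace X] {Φ : ℝ → ℝ} (hΦ : IsYoung Φ)
    {ν : Measure X} [IsFiniteMeasure ν] {G u : X → ℝ} (hG : Measurable G) (hu : Measurable u)
    (hΦu : ∀ δ : ℝ, 0 < δ → Measurable fun x => Φ (|u x| / δ)) :
    ∫⁻ x, ENNReal.ofReal (|G x| * |u x|) ∂ν ≤
      2 * (luxNorm (conjY Φ) ν G * luxNorm Φ ν u) := by
  by_cases hA : luxNorm (conjY Φ) ν G = 0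
  · have := lux_zero (Φ 1) (fun t _ => by simpa using young_ineq hΦ t zero_le_one) hG hA
    rw [hA, zero_mul, mul_zero, nonpos_iff_eq_zero]
    refine (lintegral_congr_ae (g := fun _ => 0) ?_).trans (by simp)
    filter_upwards [this] with x hx
    simp [hx]
  by_cases hB : luxNorm Φ ν u = 0
  · have := lux_zero (conjY Φ 1)
      (fun t ht => by have := young_ineq hΦ 1 ht; linarith) hu hB
    rw [hB, mul_zero, mul_zero, nonpos_iff_eq_zero]
    refine (lintegral_congr_ae (g := fun _ => 0) ?_).trans (by simp)
    filter_upwards [this] with x hx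
    simp [hx]
  rw [← mul_assoc]
  refine ENNReal.le_mul_of_forall_lt (Or.inl (by simp [hA])) (Or.inr hB) ?_
  intro a' ha' b' hb'
  have ha2 : luxNorm (conjY Φ) ν G < a' / 2 := by
    rw [ENNReal.lt_div_iff_mul_lt (by simp) (by simp), mul_comm]; exact ha'
  obtain ⟨_, ⟨δ, hδ, rfl, hi⟩, hlt⟩ := sInf_lt_iff.1 ha2
  obtain ⟨_, ⟨η, hη, rfl, hj⟩, hlt'⟩ := sInf_lt_iff.1 hb'
  have hδa : 2 * ENNReal.ofReal δ ≤ a' := by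
    rw [mul_comm, ← ENNReal.le_div_iff_mul_le (by simp) (by simp)]; exact hlt.le
  refine le_trans ?_ (mul_le_mul' hδa hlt'.le)
  calc ∫⁻ x, ENNReal.ofReal (|G x| * |u x|) ∂ν
      ≤ ∫⁻ x, ENNReal.ofReal (δ * η) * (ENNReal.ofReal (conjY Φ (|G x| / δ))
          + ENNReal.ofReal (Φ (|u x| / η))) ∂ν := by
        refine lintegral_mono fun x => ?_
        have h1 := young_ineq hΦ (s := |u x| / η) (|G x| / δ) (by positivity)
        rw [← ENNReal.ofReal_add (conjY_nonneg hΦ _) (hΦ.2.2.2.2.1 _ (by positivity)),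
          ← ENNReal.ofReal_mul (by positivity)]
        refine ENNReal.ofReal_le_ofReal ?_
        have h2 : |G x| * |u x| = δ * η * (|u x| / η * (|G x| / δ)) := by field_simp
        rw [h2]
        gcongr
    _ = ENNReal.ofReal (δ * η) * (∫⁻ x, ENNReal.ofReal (conjY Φ (|G x| / δ)) ∂ν
          + ∫⁻ x, ENNReal.ofReal (Φ (|u x| / η)) ∂ν) := by
        rw [lintegral_const_mul' _ _ (by simp), lintegral_add_right _ (hΦu η hη).ennreal_ofReal]
    _ ≤ ENNReal.ofReal (δ * η) * (1 + 1) := by gcongr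
    _ = _ := by rw [ENNReal.ofReal_mul hδ.le, one_add_one_eq_two]; ring

lemma young_comp_meas {X : Type*} [MeasurableSpace X] {Φ : ℝ → ℝ} (hΦ : IsYoung Φ) {u : X → ℝ}
    (hu : Measurable u) (h0 : ∀ x, 0 ≤ u x) : Measurable fun x => Φ (u x) := by
  have hc : Continuous fun t : ℝ => Φ (max t 0) := by
    refine hΦ.1.comp_continuous (by fun_prop) fun t => ?_
    simp
  have : (fun x => Φ (u x)) = (fun t : ℝ => Φ (max t 0)) ∘ u := by
    ext x; simp [h0 x]
  rw [this]
  exact hc.measurable.comp hu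

/-- continuity estimate for the Nemytskii map in Orlicz norms. -/
theorem stmt6 {N : ℕ} (hN : 1 ≤ N) {Ω : Type*} [MeasurableSpace Ω] (μ : Measure Ω)
    [IsProbabilityMeasure μ]
    (Φ : ℝ → ℝ) (hΦ : IsYoung Φ)
    (Q : Set (Fin N → ℝ)) (hQo : IsOpen Q) (hQb : Bornology.IsBounded Q)
    (f : (Fin N → ℝ) → Ω → (Fin N → ℝ) → (Fin N → ℝ) → ℝ)
    (hfmeas : ∀ x lam : Fin N → ℝ, Measurable fun p : Ω × (Fin N → ℝ) => f x p.1 p.2 lam)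
    (hfcont : ∀ᵐ ω ∂μ, Continuous fun q : (Fin N → ℝ) × (Fin N → ℝ) × (Fin N → ℝ) =>
      f q.1 ω q.2.1 q.2.2)
    (hH1 : ∃ ϖ : ℝ → ℝ, Continuous ϖ ∧ ϖ 0 = 0 ∧ (∀ t, 0 ≤ ϖ t) ∧
      ∃ a : (Fin N → ℝ) → ℝ, LocallyIntegrable a volume ∧
        ∀ᵐ p ∂(μ.prod (volume : Measure (Fin N → ℝ))), ∀ x x' lam : Fin N → ℝ,
          |f x p.1 p.2 lam - f x' p.1 p.2 lam| ≤ ϖ (enorm2 (x - x')) * (a p.2 + f x p.1 p.2 lam))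
    (hH2 : ∀ᵐ p ∂(μ.prod (volume : Measure (Fin N → ℝ))), ∀ x : Fin N → ℝ,
      StrictConvexOn ℝ Set.univ (f x p.1 p.2))
    (c₁ c₂ : ℝ) (hc₁ : 0 < c₁) (hc₂ : 0 < c₂)
    (hH3 : ∀ᵐ p ∂(μ.prod (volume : Measure (Fin N → ℝ))), ∀ x lam : Fin N → ℝ,
      c₁ * Φ (enorm2 lam) ≤ f x p.1 p.2 lam ∧ f x p.1 p.2 lam ≤ c₂ * (1 + Φ (enorm2 lam)))
    (v w : (Fin N → ℝ) → Ω → (Fin N → ℝ) → Fin N → ℝ)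
    (hvmeas : Measurable fun p : ((Fin N → ℝ) × Ω) × (Fin N → ℝ) => v p.1.1 p.1.2 p.2)
    (hwmeas : Measurable fun p : ((Fin N → ℝ) × Ω) × (Fin N → ℝ) => w p.1.1 p.1.2 p.2)
    (hvper : ∀ (x : Fin N → ℝ) (ω : Ω) (y : Fin N → ℝ) (k : Fin N → ℤ),
      v x ω (y + fun i => (k i : ℝ)) = v x ω y)
    (hwper : ∀ (x : Fin N → ℝ) (ω : Ω) (y : Fin N → ℝ) (k : Fin N → ℤ),
      w x ω (y + fun i => (k i : ℝ)) = w x ω y) :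
    (∫⁻ p, ENNReal.ofReal
        |f p.1.1 p.1.2 p.2 (v p.1.1 p.1.2 p.2) - f p.1.1 p.1.2 p.2 (w p.1.1 p.1.2 p.2)|
        ∂(((volume.restrict Q).prod μ).prod (volume.restrict (Ycube N)))) ≤
      ENNReal.ofReal (4 * (N : ℝ) * c₂) *
        luxNorm (conjY Φ) (((volume.restrict Q).prod μ).prod (volume.restrict (Ycube N)))
          (fun p => (1 + Φ (2 * (1 + enorm2 (v p.1.1 p.1.2 p.2) + enorm2 (w p.1.1 p.1.2 p.2)))) /
            (1 + enorm2 (v p.1.1 p.1.2 p.2) + enorm2 (w p.1.1 p.1.2 p.2))) *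
        luxNorm Φ (((volume.restrict Q).prod μ).prod (volume.restrict (Ycube N)))
          (fun p => enorm2 (v p.1.1 p.1.2 p.2 - w p.1.1 p.1.2 p.2)) := by
  have hQfin : IsFiniteMeasure ((volume : Measure (Fin N → ℝ)).restrict Q) :=
    ⟨by simpa using hQb.measure_lt_top⟩
  have hYfin : IsFiniteMeasure ((volume : Measure (Fin N → ℝ)).restrict (Ycube N)) :=
    ⟨by simpa [Ycube] using (isCompact_Icc (a := (0 : Fin N → ℝ)) (b := 1)).measure_lt_top⟩
  set ν := ((volume.restrict Q).prod μ).prod (volume.restrict (Ycube N)) with hν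
  set G : ((Fin N → ℝ) × Ω) × (Fin N → ℝ) → ℝ := fun p =>
    (1 + Φ (2 * (1 + enorm2 (v p.1.1 p.1.2 p.2) + enorm2 (w p.1.1 p.1.2 p.2)))) /
            (1 + enorm2 (v p.1.1 p.1.2 p.2) + enorm2 (w p.1.1 p.1.2 p.2)) with hG
  set u : ((Fin N → ℝ) × Ω) × (Fin N → ℝ) → ℝ := fun p =>
    enorm2 (v p.1.1 p.1.2 p.2 - w p.1.1 p.1.2 p.2) with hu
  have hmv := measurable_enorm2.comp hvmeas
  have hmw := measurable_enorm2.comp hwmeas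
  have hmM : Measurable fun p : ((Fin N → ℝ) × Ω) × (Fin N → ℝ) =>
      1 + enorm2 (v p.1.1 p.1.2 p.2) + enorm2 (w p.1.1 p.1.2 p.2) :=
    (measurable_const.add hmv).add hmw
  have hM0 : ∀ p : ((Fin N → ℝ) × Ω) × (Fin N → ℝ),
      0 ≤ 1 + enorm2 (v p.1.1 p.1.2 p.2) + enorm2 (w p.1.1 p.1.2 p.2) := fun p => by
    have := enorm2_nonneg (v p.1.1 p.1.2 p.2)
    have := enorm2_nonneg (w p.1.1 p.1.2 p.2)
    linarith
  have hGm : Measurable G := by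
    refine Measurable.div (measurable_const.add ?_) hmM
    exact young_comp_meas hΦ (measurable_const.mul hmM) fun p => mul_nonneg zero_le_two (hM0 p)
  have hum : Measurable u := measurable_enorm2.comp (hvmeas.sub hwmeas)
  have hqmp : Measure.QuasiMeasurePreserving
      (fun p : ((Fin N → ℝ) × Ω) × (Fin N → ℝ) => (p.1.2, p.2)) ν
      (μ.prod (volume : Measure (Fin N → ℝ))) := by
    have h1 : Measure.QuasiMeasurePreserving
        (fun p : ((Fin N → ℝ) × Ω) × (Fin N → ℝ) => (p.1.2, p.2)) ν
        (μ.prod (volume.restrict (Ycube N))) :=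
      (Measure.quasiMeasurePreserving_snd (μ := (volume : Measure (Fin N → ℝ)).restrict Q)
        (ν := μ.prod (volume.restrict (Ycube N)))).comp
        (measurePreserving_prodAssoc (volume.restrict Q) μ
          (volume.restrict (Ycube N))).quasiMeasurePreserving
    exact h1.mono_right (Measure.AbsolutelyContinuous.rfl.prod Measure.restrict_le_self.absolutelyContinuous)
  have hpt : ∀ᵐ p ∂ν, |f p.1.1 p.1.2 p.2 (v p.1.1 p.1.2 p.2) -
      f p.1.1 p.1.2 p.2 (w p.1.1 p.1.2 p.2)| ≤ c₂ * (|G p| * |u p|) := by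
    filter_upwards [hqmp.ae hH2, hqmp.ae hH3] with p h2 h3
    have hle := pointwise_abs hΦ hc₂ (h2 p.1.1).convexOn
      (fun l => (mul_nonneg hc₁.le (hΦ.2.2.2.2.1 _ (enorm2_nonneg l))).trans (h3 p.1.1 l).1)
      (fun l => (h3 p.1.1 l).2) (v p.1.1 p.1.2 p.2) (w p.1.1 p.1.2 p.2)
    refine hle.trans ?_
    rw [← abs_mul]
    exact mul_le_mul_of_nonneg_left (le_abs_self _) hc₂.le
  calc _ ≤ ∫⁻ p, ENNReal.ofReal c₂ * ENNReal.ofReal (|G p| * |u p|) ∂ν := by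
        refine lintegral_mono_ae ?_
        filter_upwards [hpt] with p hp
        rw [← ENNReal.ofReal_mul hc₂.le]
        exact ENNReal.ofReal_le_ofReal hp
    _ = ENNReal.ofReal c₂ * ∫⁻ p, ENNReal.ofReal (|G p| * |u p|) ∂ν :=
        lintegral_const_mul' _ _ (by simp)
    _ ≤ ENNReal.ofReal c₂ * (2 * (luxNorm (conjY Φ) ν G * luxNorm Φ ν u)) := by
        gcongr
        refine holder_orlicz hΦ hGm hum fun δ hδ => ?_
        exact young_comp_meas hΦ (by fun_prop) fun x => by positivity
    _ = ENNReal.ofReal (c₂ * 2) * luxNorm (conjY Φ) ν G * luxNorm Φ ν u := by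
        rw [ENNReal.ofReal_mul hc₂.le, ENNReal.ofReal_ofNat]; ring
    _ ≤ _ := by
        have : (1 : ℝ) ≤ N := by exact_mod_cast hN
        have h4 : c₂ * 2 ≤ 4 * (N : ℝ) * c₂ := by nlinarith
        exact mul_le_mul' (mul_le_mul' (ENNReal.ofReal_le_ofReal h4) le_rfl) le_rfl
end
end
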